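/- For every integer h > 0, every K_h-minor-free edge-weighted graph G and every real ρ > 0, there exist a partition 𝒫 of V(G) into parts each of strong diameter at most ρ and a total order ⪯ on 𝒫 such that for every real r > ρ, wcol_r(G,𝒫,⪯) ≤ C(h−2+2·⌈4h·r/ρ⌉, h−1) · (12+8r/ρ) · (h−1), where C(·,·) denotes the binomial coefficient. -/

import Mathlib

open scoped ENNReal

namespace ScatterDim

variable {V : Type}

/-- Total weight of a walk in an edge-weighted graph. -/
noncomputable def walkWeight {G : SimpleGraph V} (w : Sym2 V → ℝ≥0∞)
    {u v : V} (p : G.Walk u v) : ℝ≥0∞ :=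
  (p.edges.map w).sum

/-- Shortest-path metric of an edge-weighted graph: the infimum of the total
weights of walks between the two vertices. -/
noncomputable def gdist (G : SimpleGraph V) (w : Sym2 V → ℝ≥0∞) (u v : V) : ℝ≥0∞ :=
  ⨅ p : G.Walk u v, walkWeight w p

/-- Shortest-path distance measured within the subgraph induced on `S`
(`⊤` if one of the endpoints is not in `S`). -/
noncomputable def distOn (G : SimpleGraph V) (w : Sym2 V → ℝ≥0∞) (S : Set V)
    (u v : V) : ℝ≥0∞ :=
  ⨅ (hu : u ∈ S), ⨅ (hv : v ∈ S), ⨅ (p : (G.induce S).Walk ⟨u, hu⟩ ⟨v, hv⟩),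
    (p.edges.map (fun e => w (e.map Subtype.val))).sum

/-- Distance between two sets of vertices inside the subgraph induced on `S`. -/
noncomputable def setDistOn (G : SimpleGraph V) (w : Sym2 V → ℝ≥0∞) (S : Set V)
    (A B : Set V) : ℝ≥0∞ :=
  ⨅ a ∈ A, ⨅ b ∈ B, distOn G w S a b

/-- Distance from a point to a set. -/
noncomputable def pdist (G : SimpleGraph V) (w : Sym2 V → ℝ≥0∞) (u : V) (X : Set V) : ℝ≥0∞ :=
  ⨅ x ∈ X, gdist G w u x

/-- `Y` is weakly `r`-reachable from `X` (with respect to the partition `P`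
ordered by `le`): there is a path of total weight at most `r` from a vertex of `X`
to a vertex of `Y` in the subgraph induced on the union of the parts `Z` with `Y ⪯ Z`. -/
def WReach (G : SimpleGraph V) (w : Sym2 V → ℝ≥0∞) (P : Set (Set V))
    (le : Set V → Set V → Prop) (r : ℝ) (X Y : Set V) : Prop :=
  setDistOn G w (⋃₀ {Z | Z ∈ P ∧ le Y Z}) X Y ≤ ENNReal.ofReal r

/-- The weak coloring number of `G` with respect to the partition `P`
and the order `le`: the maximum over `X ∈ P` of the number of parts weakly
`r`-reachable from `X`. -/
noncomputable def wcol (G : SimpleGraph V) (w : Sym2 V → ℝ≥0∞) (P : Set (Set V))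
    (le : Set V → Set V → Prop) (r : ℝ) : ℕ :=
  ⨆ X ∈ P, {Y | Y ∈ P ∧ WReach G w P le r X Y}.ncard

/-- `le` is a total (linear) order on the collection `P`. -/
def IsLinearOrderOn {α : Type} (P : Set α) (le : α → α → Prop) : Prop :=
  (∀ X ∈ P, le X X) ∧
  (∀ X ∈ P, ∀ Y ∈ P, le X Y → le Y X → X = Y) ∧
  (∀ X ∈ P, ∀ Y ∈ P, ∀ Z ∈ P, le X Y → le Y Z → le X Z) ∧
  (∀ X ∈ P, ∀ Y ∈ P, le X Y ∨ le Y X)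

/-- An `ε`-ladder of width `r` and length `ℓ` in the metric `dist`. -/
def IsLadder (dist : V → V → ℝ≥0∞) (ε r : ℝ) (ℓ : ℕ) (x p : Fin ℓ → V) : Prop :=
  (∀ i j : Fin ℓ, j < i → dist (p j) (x i) ≤ ENNReal.ofReal r) ∧
  (∀ i : Fin ℓ, ENNReal.ofReal ((1 + ε) * r) < dist (p i) (x i))

/-- `G` contains the complete graph on `h` vertices as a minor, witnessed by
pairwise disjoint connected nonempty branch sets that are pairwise adjacent. -/
def HasCompleteMinor (G : SimpleGraph V) (h : ℕ) : Prop :=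
  ∃ B : Fin h → Set V,
    (∀ i, (G.induce (B i)).Connected) ∧
    (∀ i j, i ≠ j → Disjoint (B i) (B j)) ∧
    (∀ i j, i ≠ j → ∃ u ∈ B i, ∃ v ∈ B j, G.Adj u v)

/-- `(T, bag)` is a tree decomposition of `G`. -/
def IsTreeDecompOf {ι : Type} (G : SimpleGraph V) (T : SimpleGraph ι) (bag : ι → Set V) : Prop :=
  T.IsTree ∧
  (∀ u v : V, G.Adj u v → ∃ t, u ∈ bag t ∧ v ∈ bag t) ∧
  (∀ v : V, (T.induce {t | v ∈ bag t}).Connected)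

/-- `G` has treewidth at most `n`. -/
def TreewidthAtMost (G : SimpleGraph V) (n : ℕ) : Prop :=
  ∃ (ι : Type) (T : SimpleGraph ι) (bag : ι → Set V),
    IsTreeDecompOf G T bag ∧ ∀ t, (bag t).ncard ≤ n + 1

/-- `D` is an `r`-cover of the edge-weighted graph `(G, w)`. -/
def IsCover (G : SimpleGraph V) (w : Sym2 V → ℝ≥0∞) (r : ℝ) (D : Set (Set V)) : Prop :=
  ∀ v : V, ∃ A ∈ D, ∀ u : V, gdist G w v u ≤ ENNReal.ofReal r → u ∈ A

/-!
The vertices are assigned to supernodes, created one at a time. A new supernode starts as a skeleton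
inside a component of the unassigned vertices: a connected union of at most `h - 1` shortest paths
that is adjacent to every earlier supernode adjacent to the component. These earlier supernodes and
the component form a complete minor, so there are at most `h - 2` of them; the new supernode is said
to see them. If the component comes within `γ` of a supernode `X` without being adjacent to it, then
first its vertices within `γ` of the adjacent supernodes later than `X` are absorbed by these. Hence
a supernode that does not see `X` is separated from it by a buffer of width `γ`, and a supernode
grows by at most `γ` for each supernode that it sees.

A walk of cost `k * γ` can therefore be followed by at most `2 * k - 1` steps, each from a supernode
to one that it sees. Of two supernodes seen by a third, the later one sees the earlier one, so these
steps reach at most `(2 * k - 1 + (h - 1)).choose (h - 1)` supernodes. Each supernode is split into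
clusters around an `ε`-net of its skeleton, and few points of the net lie at bounded distance from
one another because the skeleton consists of few shortest paths.
-/

open scoped NNReal

section Walks

variable {G : SimpleGraph V} {w : Sym2 V → ℝ≥0} {A B C : Set V} {c c' : ℝ} {u v x y : V}

/-- The total weight of a walk, for finite weights. -/
def cost (w : Sym2 V → ℝ≥0) {u v : V} (p : G.Walk u v) : ℝ≥0 :=
  (p.edges.map w).sum

@[simp]
theorem cost_nil : cost w (SimpleGraph.Walk.nil : G.Walk u u) = 0 := rfl

@[simp]
theorem cost_cons (huv : G.Adj u v) (p : G.Walk v x) :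
    cost w (.cons huv p) = w s(u, v) + cost w p := by
  simp [cost]

@[simp]
theorem cost_append (p : G.Walk u v) (q : G.Walk v x) :
    cost w (p.append q) = cost w p + cost w q := by
  simp [cost, SimpleGraph.Walk.edges_append]

@[simp]
theorem cost_reverse (p : G.Walk u v) : cost w p.reverse = cost w p := by
  simp [cost, SimpleGraph.Walk.edges_reverse, List.sum_reverse]

theorem cost_bypass_le [DecidableEq V] (p : G.Walk u v) : cost w p.bypass ≤ cost w p :=
  (p.edges_bypass_sublist_edges.map w).sum_le_sum fun _ _ => zero_le

/-- `u` and `v` are joined by a walk of `G` all of whose vertices lie in `A`. -/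
def Linked (G : SimpleGraph V) (A : Set V) (u v : V) : Prop :=
  ∃ p : G.Walk u v, ∀ x ∈ p.support, x ∈ A

/-- `u` and `v` are joined by a walk of cost at most `c` all of whose vertices lie in `A`, i.e.
`dist_{G[A]}(u, v) ≤ c`. -/
def WalkWithin (G : SimpleGraph V) (w : Sym2 V → ℝ≥0) (A : Set V) (u v : V) (c : ℝ) : Prop :=
  ∃ p : G.Walk u v, (∀ x ∈ p.support, x ∈ A) ∧ cost w p ≤ c

theorem support_subset_of_adj_closed (hC : ∀ a ∈ C, ∀ b ∈ A, G.Adj a b → b ∈ C) :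
    ∀ {u v : V} (p : G.Walk u v), (∀ x ∈ p.support, x ∈ A) → u ∈ C → ∀ x ∈ p.support, x ∈ C
  | _, _, .nil, _, hu => by simpa using hu
  | _, _, .cons huv p, hp, hu => by
    simp only [SimpleGraph.Walk.support_cons, List.mem_cons, forall_eq_or_imp] at hp ⊢
    exact ⟨hu, support_subset_of_adj_closed hC p hp.2
      (hC _ hu _ (hp.2 _ p.start_mem_support) huv)⟩

namespace Linked

theorem left_mem (h : Linked G A u v) : u ∈ A :=
  let ⟨p, hp⟩ := h
  hp _ p.start_mem_support

theorem right_mem (h : Linked G A u v) : v ∈ A :=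
  let ⟨p, hp⟩ := h
  hp _ p.end_mem_support

theorem refl (hu : u ∈ A) : Linked G A u u :=
  ⟨.nil, by simpa using hu⟩

theorem of_adj (hu : u ∈ A) (hv : v ∈ A) (huv : G.Adj u v) : Linked G A u v :=
  ⟨huv.toWalk, by simp [hu, hv]⟩

theorem symm (h : Linked G A u v) : Linked G A v u :=
  let ⟨p, hp⟩ := h
  ⟨p.reverse, by simpa using hp⟩

theorem trans (h : Linked G A u v) (h' : Linked G A v x) : Linked G A u x := by
  obtain ⟨p, hp⟩ := h
  obtain ⟨q, hq⟩ := h'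
  refine ⟨p.append q, fun z hz => ?_⟩
  exact ((SimpleGraph.Walk.mem_support_append_iff _ _).1 hz).elim (hp z) (hq z)

theorem mono (h : Linked G A u v) (hAB : A ⊆ B) : Linked G B u v :=
  let ⟨p, hp⟩ := h
  ⟨p, fun z hz => hAB (hp z hz)⟩

theorem restrict (h : Linked G A u v) (hC : ∀ a ∈ C, ∀ b ∈ A, G.Adj a b → b ∈ C) (hu : u ∈ C) :
    Linked G C u v :=
  let ⟨p, hp⟩ := h
  ⟨p, support_subset_of_adj_closed hC p hp hu⟩

theorem exists_walkWithin (w : Sym2 V → ℝ≥0) (h : Linked G A u v) : ∃ c, WalkWithin G w A u v c :=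
  let ⟨p, hp⟩ := h
  ⟨cost w p, p, hp, le_rfl⟩

end Linked

namespace WalkWithin

theorem linked (h : WalkWithin G w A u v c) : Linked G A u v :=
  let ⟨p, hp, _⟩ := h
  ⟨p, hp⟩

theorem nonneg (h : WalkWithin G w A u v c) : 0 ≤ c :=
  let ⟨p, _, hc⟩ := h
  (cost w p).coe_nonneg.trans hc

theorem left_mem (h : WalkWithin G w A u v c) : u ∈ A := h.linked.left_mem

theorem right_mem (h : WalkWithin G w A u v c) : v ∈ A := h.linked.right_mem

theorem refl (hu : u ∈ A) (hc : 0 ≤ c) : WalkWithin G w A u u c :=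
  ⟨.nil, by simpa using hu, by simpa using hc⟩

theorem mono (h : WalkWithin G w A u v c) (hAB : A ⊆ B) (hc : c ≤ c') :
    WalkWithin G w B u v c' :=
  let ⟨p, hp, hpc⟩ := h
  ⟨p, fun z hz => hAB (hp z hz), hpc.trans hc⟩

theorem mono_cost (h : WalkWithin G w A u v c) (hc : c ≤ c') : WalkWithin G w A u v c' :=
  h.mono subset_rfl hc

theorem symm (h : WalkWithin G w A u v c) : WalkWithin G w A v u c :=
  let ⟨p, hp, hc⟩ := h
  ⟨p.reverse, by simpa using hp, by simpa using hc⟩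

theorem trans (h : WalkWithin G w A u v c) (h' : WalkWithin G w A v x c') :
    WalkWithin G w A u x (c + c') := by
  obtain ⟨p, hp, hpc⟩ := h
  obtain ⟨q, hq, hqc⟩ := h'
  refine ⟨p.append q, fun z hz => ?_, ?_⟩
  · exact ((SimpleGraph.Walk.mem_support_append_iff _ _).1 hz).elim (hp z) (hq z)
  · simpa using add_le_add hpc hqc

theorem cons (huv : G.Adj u v) (hu : u ∈ A) (h : WalkWithin G w A v x c) :
    WalkWithin G w A u x (w s(u, v) + c) := by
  obtain ⟨p, hp, hpc⟩ := h
  exact ⟨.cons huv p, by simpa [hu] using hp, by simpa using hpc⟩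

theorem restrict (h : WalkWithin G w A u v c)
    (hC : ∀ a ∈ C, ∀ b ∈ A, G.Adj a b → b ∈ C) (hu : u ∈ C) : WalkWithin G w C u v c :=
  let ⟨p, hp, hpc⟩ := h
  ⟨p, support_subset_of_adj_closed hC p hp hu, hpc⟩

theorem of_mem_support (p : G.Walk u v) (hp : ∀ z ∈ p.support, z ∈ A) (hc : cost w p ≤ c)
    (hx : x ∈ p.support) : WalkWithin G w A x v c := by
  classical
  refine ⟨p.dropUntil x hx, fun z hz => hp z (p.support_dropUntil_subset_support hx hz), ?_⟩
  have : cost w (p.takeUntil x hx) + cost w (p.dropUntil x hx) = cost w p := by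
    rw [← cost_append, p.take_spec hx]
  have : cost w (p.dropUntil x hx) ≤ cost w p := this ▸ le_add_self
  exact (NNReal.coe_le_coe.2 this).trans hc

theorem to_ball (h : WalkWithin G w A u v c) :
    WalkWithin G w {x | WalkWithin G w A x v c} u v c :=
  let ⟨p, hp, hpc⟩ := h
  ⟨p, fun _ hx => of_mem_support p hp hpc hx, hpc⟩

theorem exists_forall_le {α : Type*} [LinearOrder α] (f : V → α) (h : WalkWithin G w A u v c) :
    ∃ z, WalkWithin G w {x ∈ A | f z ≤ f x} u z c ∧ WalkWithin G w {x ∈ A | f z ≤ f x} z v c := by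
  obtain ⟨p, hp, hpc⟩ := h
  obtain ⟨z, hz, hmin⟩ := Set.exists_min_image {x | x ∈ p.support} f
    (List.finite_toSet p.support) ⟨u, p.start_mem_support⟩
  have hpz : ∀ x ∈ p.support, x ∈ {x ∈ A | f z ≤ f x} := fun x hx => ⟨hp x hx, hmin x hx⟩
  refine ⟨z, (of_mem_support p.reverse ?_ ?_ ?_).symm, of_mem_support p hpz hpc hz⟩
  · simpa only [SimpleGraph.Walk.support_reverse, List.mem_reverse] using hpz
  · rwa [cost_reverse]
  · rwa [SimpleGraph.Walk.support_reverse, List.mem_reverse]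

theorem exists_exit (h : WalkWithin G w A u x c) (hu : u ∈ C) (hx : x ∉ C) :
    ∃ a ∈ C, ∃ b ∈ A, b ∉ C ∧ G.Adj a b ∧ WalkWithin G w (insert b C) u b c := by
  obtain ⟨p, hp, hpc⟩ := h
  induction p generalizing c with
  | nil => exact absurd hu hx
  | @cons u v x huv p ih =>
    simp only [SimpleGraph.Walk.support_cons, List.mem_cons, forall_eq_or_imp] at hp
    rw [cost_cons, NNReal.coe_add] at hpc
    by_cases hv : v ∈ C
    · obtain ⟨a, ha, b, hb, hbC, hab, hwalk⟩ :=
        ih (c := c - w s(u, v)) hv hx hp.2 (by linarith)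
      exact ⟨a, ha, b, hb, hbC, hab, (hwalk.cons huv (Or.inr hu)).mono_cost (by linarith)⟩
    · refine ⟨u, hu, v, hp.2 v p.start_mem_support, hv, huv, ?_⟩
      refine ((refl (Set.mem_insert v C) le_rfl).cons huv (Or.inr hu)).mono_cost ?_
      linarith [(cost w p).coe_nonneg]

/-- A walk longer than `g` is cut at the first edge on which its cost exceeds `g`. -/
theorem split (h : WalkWithin G w A u v c) {g : ℝ} (hg : 0 ≤ g) :
    WalkWithin G w A u v g ∨
      ∃ x y, WalkWithin G w A u x g ∧ G.Adj x y ∧ WalkWithin G w A y v (c - g) := by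
  obtain ⟨p, hp, hpc⟩ := h
  induction p generalizing c g with
  | nil => exact .inl ⟨.nil, hp, by simpa using hg⟩
  | @cons u v x huv p ih =>
    simp only [SimpleGraph.Walk.support_cons, List.mem_cons, forall_eq_or_imp] at hp
    rw [cost_cons, NNReal.coe_add] at hpc
    rcases lt_or_ge g (w s(u, v)) with hlt | hge
    · exact .inr ⟨u, v, refl hp.1 hg, huv, p, hp.2, by linarith⟩
    · rcases ih (c := c - w s(u, v)) (g := g - w s(u, v)) (by linarith) hp.2 (by linarith) with
        hshort | ⟨a, b, hwalk, hab, hrest⟩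
      · exact .inl ((hshort.cons huv hp.1).mono_cost (by linarith))
      · exact .inr ⟨a, b, (hwalk.cons huv hp.1).mono_cost (by linarith), hab,
          hrest.mono_cost (by linarith)⟩

end WalkWithin

/-- The connected component of `u` in `G[A]`. -/
def component (G : SimpleGraph V) (A : Set V) (u : V) : Set V :=
  {v | Linked G A u v}

theorem component_subset : component G A u ⊆ A := fun _ hv => hv.right_mem

theorem mem_component_of_adj (hu : x ∈ component G A u) (hy : y ∈ A) (hxy : G.Adj x y) :
    y ∈ component G A u :=
  hu.trans (.of_adj hu.right_mem hy hxy)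

theorem linked_component (hx : x ∈ component G A u) (hy : y ∈ component G A u) :
    Linked G (component G A u) x y :=
  (hx.symm.trans hy).restrict (fun _ ha _ hb => mem_component_of_adj ha hb) hx

end Walks

section Distance

variable {G : SimpleGraph V} {w : Sym2 V → ℝ≥0} {A : Set V} {u v x : V} {c : ℝ}

/-- The distance between `u` and `v` in `G[A]`. It has the junk value `0` when `u` and `v` are not
linked in `A`. -/
noncomputable def distWithin (G : SimpleGraph V) (w : Sym2 V → ℝ≥0) (A : Set V) (u v : V) : ℝ :=
  sInf {c | WalkWithin G w A u v c}

theorem distWithin_nonneg : 0 ≤ distWithin G w A u v :=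
  Real.sInf_nonneg fun _ hc => WalkWithin.nonneg hc

theorem WalkWithin.distWithin_le (h : WalkWithin G w A u v c) : distWithin G w A u v ≤ c :=
  csInf_le ⟨0, fun _ hc => WalkWithin.nonneg hc⟩ h

/-- Bypassing loops does not increase the cost, and there are only finitely many paths. -/
theorem Linked.walkWithin_distWithin [Finite V] (h : Linked G A u v) :
    WalkWithin G w A u v (distWithin G w A u v) := by
  classical
  have := Fintype.ofFinite V
  have bypass_mem {p : G.Walk u v} (hp : ∀ x ∈ p.support, x ∈ A) : ∀ x ∈ p.bypass.support, x ∈ A :=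
    fun x hx => hp x (p.support_bypass_subset_support hx)
  obtain ⟨p₀, hp₀⟩ := h
  obtain ⟨p, hpA, hmin⟩ := Set.exists_min_image {p : G.Path u v | ∀ x ∈ p.1.support, x ∈ A}
    (fun p => cost w p.1) (Set.toFinite _) ⟨⟨p₀.bypass, p₀.bypass_isPath⟩, bypass_mem hp₀⟩
  refine ⟨p.1, hpA, le_csInf ⟨cost w p.1, p.1, hpA, le_rfl⟩ ?_⟩
  rintro c ⟨q, hq, hqc⟩
  exact (NNReal.coe_le_coe.2 ((hmin ⟨q.bypass, q.bypass_isPath⟩ (bypass_mem hq)).trans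
    (cost_bypass_le q))).trans hqc

theorem walkWithin_of_forall_gt [Finite V] (h : ∀ c' > c, WalkWithin G w A u v c') :
    WalkWithin G w A u v c :=
  (h (c + 1) (by linarith)).linked.walkWithin_distWithin.mono_cost
    (le_of_forall_gt_imp_ge_of_dense fun c' hc' => (h c' hc').distWithin_le)

theorem WalkWithin.distWithin_le_add [Finite V] (h : WalkWithin G w A u v c)
    (hv : Linked G A v x) : distWithin G w A u x ≤ c + distWithin G w A v x :=
  (h.trans hv.walkWithin_distWithin).distWithin_le

end Distance

section Voronoi

variable [Finite V] {G : SimpleGraph V} {w : Sym2 V → ℝ≥0} {A K : Set V} {u v k k' : V} {c : ℝ}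

/-- `k` is the point of `K` nearest to `v`, where only walks in `A` that meet `K` at their endpoint
alone are considered, and ties are broken by an arbitrary enumeration of `V`. -/
def IsNearest (G : SimpleGraph V) (w : Sym2 V → ℝ≥0) (A K : Set V) (v k : V) : Prop :=
  k ∈ K ∧ Linked G (insert k (A \ K)) v k ∧ ∀ k' ∈ K, Linked G (insert k' (A \ K)) v k' →
    toLex (distWithin G w (insert k (A \ K)) v k, Finite.equivFin V k) ≤
      toLex (distWithin G w (insert k' (A \ K)) v k', Finite.equivFin V k')

namespace IsNearest

theorem eq (h : IsNearest G w A K v k) (h' : IsNearest G w A K v k') : k = k' := by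
  have hkey := le_antisymm (h.2.2 k' h'.1 h'.2.1) (h'.2.2 k h.1 h.2.1)
  exact (Finite.equivFin V).injective (Prod.ext_iff.1 (toLex.injective hkey)).2

theorem eq_of_mem (h : IsNearest G w A K v k) (hv : v ∈ K) : v = k :=
  h.2.1.left_mem.resolve_right fun hvA => hvA.2 hv

theorem exists_of_walkWithin (hk : k ∈ K) (hvk : WalkWithin G w A v k c) :
    ∃ k, IsNearest G w A K v k ∧ distWithin G w (insert k (A \ K)) v k ≤ c := by
  obtain ⟨k₁, hk₁, hvk₁⟩ : ∃ k₁ ∈ K, WalkWithin G w (insert k₁ (A \ K)) v k₁ c := by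
    by_cases hv : v ∈ K
    · exact ⟨v, hv, .refl (Set.mem_insert _ _) hvk.nonneg⟩
    · obtain ⟨-, -, b, hbA, hb, -, hwalk⟩ :=
        hvk.exists_exit (C := A \ K) ⟨hvk.left_mem, hv⟩ fun hkA => hkA.2 hk
      exact ⟨b, not_not.1 fun hbK => hb ⟨hbA, hbK⟩, hwalk⟩
  obtain ⟨k₀, ⟨hk₀, hvk₀⟩, hmin⟩ := Set.exists_min_image
    {k | k ∈ K ∧ Linked G (insert k (A \ K)) v k}
    (fun k => toLex (distWithin G w (insert k (A \ K)) v k, Finite.equivFin V k))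
    (Set.toFinite _) ⟨k₁, hk₁, hvk₁.linked⟩
  refine ⟨k₀, ⟨hk₀, hvk₀, fun k' hk' hvk' => hmin k' ⟨hk', hvk'⟩⟩, ?_⟩
  refine le_trans ?_ hvk₁.distWithin_le
  rcases Prod.Lex.toLex_le_toLex.1 (hmin k₁ ⟨hk₁, hvk₁.linked⟩) with hlt | ⟨heq, _⟩
  exacts [hlt.le, heq.le]

/-- The second vertex of a shortest walk to the nearest point has the same nearest point. -/
theorem of_adj (h : IsNearest G w A K v k) (hvu : G.Adj v u) (hv : v ∈ A \ K)
    (hu : Linked G (insert k (A \ K)) u k)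
    (hgeo : w s(v, u) + distWithin G w (insert k (A \ K)) u k ≤
      distWithin G w (insert k (A \ K)) v k) :
    IsNearest G w A K u k := by
  refine ⟨h.1, hu, fun k' hk' huk' => Prod.Lex.toLex_le_toLex.2 ?_⟩
  have hvk' := (huk'.walkWithin_distWithin (w := w)).cons hvu (.inr hv)
  have hle := hvk'.distWithin_le
  rcases Prod.Lex.toLex_le_toLex.1 (h.2.2 k' hk' hvk'.linked) with hlt | ⟨heq, hidx⟩
  · dsimp only at hlt ⊢
    exact .inl (by linarith)
  · dsimp only at heq hidx ⊢
    rcases (show distWithin G w (insert k (A \ K)) u k ≤ distWithin G w (insert k' (A \ K)) u k' by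
      linarith).lt_or_eq with hlt | heq
    exacts [.inl hlt, .inr ⟨heq, hidx⟩]

theorem walkWithin_cell (hKA : K ⊆ A) (h : IsNearest G w A K v k) (p : G.Walk v k)
    (hp : ∀ x ∈ p.support, x ∈ insert k (A \ K))
    (hgeo : cost w p ≤ distWithin G w (insert k (A \ K)) v k) :
    WalkWithin G w {x ∈ A | IsNearest G w A K x k} v k (cost w p) := by
  induction p with
  | nil => exact .refl ⟨hKA h.1, h⟩ (NNReal.coe_nonneg _)
  | @cons v u k hvu p ih =>
    simp only [SimpleGraph.Walk.support_cons, List.mem_cons, forall_eq_or_imp] at hp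
    rw [cost_cons, NNReal.coe_add] at hgeo ⊢
    by_cases hv : v ∈ K
    · obtain rfl := h.eq_of_mem hv
      exact .refl ⟨hKA hv, h⟩ (by positivity)
    have hvA : v ∈ A \ K := hp.1.resolve_left fun hvk => hv (hvk ▸ h.1)
    have huk : WalkWithin G w (insert k (A \ K)) u k (cost w p) := ⟨p, hp.2, le_rfl⟩
    have hvk := (huk.linked.walkWithin_distWithin (w := w).cons hvu (.inr hvA)).distWithin_le
    have hu := h.of_adj hvu hvA huk.linked (by linarith [huk.distWithin_le])
    exact (ih hu hp.2 (by linarith)).cons hvu ⟨hvA.1, h⟩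

end IsNearest

/-- The fibres of `root` are Voronoi cells for the centres `K` in `G[A]`: a shortest walk from `v`
to its nearest centre `root v` stays in the cell of `v`. -/
structure IsVoronoi (G : SimpleGraph V) (w : Sym2 V → ℝ≥0) (A K : Set V) (root : V → V) :
    Prop where
  root_eq : ∀ k ∈ K, root k = k
  root_mem : ∀ v, ∀ k ∈ K, Linked G A v k → root v ∈ K
  walkWithin : ∀ v, ∀ k ∈ K, ∀ c, WalkWithin G w A v k c →
    WalkWithin G w {x ∈ A | root x = root v} v (root v) c

theorem exists_isVoronoi (G : SimpleGraph V) (w : Sym2 V → ℝ≥0) (hKA : K ⊆ A) :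
    ∃ root : V → V, IsVoronoi G w A K root := by
  classical
  let root v := if h : ∃ k, IsNearest G w A K v k then h.choose else v
  have root_eq {v k} (h : IsNearest G w A K v k) : root v = k := by
    have hex : ∃ k, IsNearest G w A K v k := ⟨k, h⟩
    simpa only [root, dif_pos hex] using hex.choose_spec.eq h
  refine ⟨root, fun k hk => ?_, fun v k hk hvk => ?_, fun v k hk c hvk => ?_⟩
  · obtain ⟨k₀, hk₀, -⟩ := IsNearest.exists_of_walkWithin (w := w) hk (.refl (hKA hk) le_rfl)
    exact (root_eq hk₀).trans (hk₀.eq_of_mem hk).symm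
  · obtain ⟨k₀, hk₀, -⟩ := IsNearest.exists_of_walkWithin hk (hvk.walkWithin_distWithin (w := w))
    exact root_eq hk₀ ▸ hk₀.1
  · obtain ⟨k₀, hk₀, hle⟩ := IsNearest.exists_of_walkWithin hk hvk
    obtain ⟨p, hp, hpc⟩ := hk₀.2.1.walkWithin_distWithin (w := w)
    rw [root_eq hk₀]
    exact (hk₀.walkWithin_cell hKA p hp hpc).mono
      (fun x hx => ⟨hx.1, root_eq hx.2⟩) (hpc.trans hle)

end Voronoi

section Skeleton

variable {G : SimpleGraph V} {w : Sym2 V → ℝ≥0} {A C T : Set V} {u v x y root : V} {k : ℕ}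

/-- `T` is a connected union of at most `k` shortest paths of `G[A]` leading to a common endpoint.
In place of that endpoint the definition records the distance `depth` to it. -/
def IsSkeleton (G : SimpleGraph V) (w : Sym2 V → ℝ≥0) (A T : Set V) (k : ℕ) : Prop :=
  ∃ (depth : V → ℝ) (legs : Finset (Set V)), legs.card ≤ k ∧ ⋃₀ (legs : Set (Set V)) = T ∧
    T ⊆ A ∧ (∀ v, 0 ≤ depth v) ∧
    (∀ u v c, WalkWithin G w A u v c → depth u ≤ depth v + c) ∧
    (∀ L ∈ legs, ∀ u ∈ L, ∀ v ∈ L, WalkWithin G w L u v |depth u - depth v|) ∧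
    ∀ u ∈ T, ∀ v ∈ T, Linked G T u v

theorem IsSkeleton.subset (hT : IsSkeleton G w A T k) : T ⊆ A := by
  obtain ⟨-, -, -, -, hTA, -⟩ := hT
  exact hTA

theorem IsSkeleton.linked (hT : IsSkeleton G w A T k) (hu : u ∈ T) (hv : v ∈ T) :
    Linked G T u v := by
  obtain ⟨-, -, -, -, -, -, -, -, hlinked⟩ := hT
  exact hlinked u hu v hv

theorem IsSkeleton.mono {l : ℕ} (hT : IsSkeleton G w A T k) (hkl : k ≤ l) :
    IsSkeleton G w A T l := by
  obtain ⟨depth, legs, hcard, h⟩ := hT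
  exact ⟨depth, legs, hcard.trans hkl, h⟩

theorem walkWithin_support_of_geodesic (p : G.Walk u root) (hp : ∀ z ∈ p.support, z ∈ A)
    (hgeo : cost w p ≤ distWithin G w A u root) (hx : x ∈ p.support) :
    WalkWithin G w {z | z ∈ p.support} u x
      (distWithin G w A u root - distWithin G w A x root) := by
  classical
  have hcost : cost w (p.takeUntil x hx) + cost w (p.dropUntil x hx) = cost w p := by
    rw [← cost_append, p.take_spec hx]
  have hdrop : distWithin G w A x root ≤ cost w (p.dropUntil x hx) :=
    WalkWithin.distWithin_le
      ⟨_, fun z hz => hp z (p.support_dropUntil_subset_support hx hz), le_rfl⟩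
  rw [← hcost, NNReal.coe_add] at hgeo
  exact ⟨p.takeUntil x hx, fun z hz => p.support_takeUntil_subset_support hx hz, by linarith⟩

theorem walkWithin_support_abs_of_geodesic [Finite V] (p : G.Walk u root)
    (hp : ∀ z ∈ p.support, z ∈ A) (hgeo : cost w p ≤ distWithin G w A u root)
    (hx : x ∈ p.support) (hy : y ∈ p.support) :
    WalkWithin G w {z | z ∈ p.support} x y
      |distWithin G w A x root - distWithin G w A y root| := by
  have from_start {z} (hz : z ∈ p.support) := walkWithin_support_of_geodesic p hp hgeo hz
  induction p with
  | nil =>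
    obtain rfl := List.mem_singleton.1 hx
    exact (from_start hy).mono_cost (le_abs_self _)
  | @cons u v root huv p ih =>
    rcases List.mem_cons.1 hx with rfl | hxp
    · exact (from_start hy).mono_cost (le_abs_self _)
    rcases List.mem_cons.1 hy with rfl | hyp
    · rw [abs_sub_comm]
      exact (from_start hx).symm.mono_cost (le_abs_self _)
    simp only [SimpleGraph.Walk.support_cons, List.mem_cons, forall_eq_or_imp] at hp
    rw [cost_cons, NNReal.coe_add] at hgeo
    have hv : Linked G A v root := ⟨p, hp.2⟩
    have hu := (hv.walkWithin_distWithin (w := w).cons huv hp.1).distWithin_le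
    have hgeo_tail : cost w p ≤ distWithin G w A v root := by linarith
    exact (ih hp.2 hgeo_tail hxp hyp
      (walkWithin_support_of_geodesic p hp.2 hgeo_tail)).mono
        (fun z hz => List.mem_cons_of_mem _ hz) le_rfl

theorem Linked.exists_geodesic [Finite V] (w : Sym2 V → ℝ≥0) (h : Linked G A u root) :
    ∃ L ⊆ A, u ∈ L ∧ root ∈ L ∧ ∀ x ∈ L, ∀ y ∈ L,
      WalkWithin G w L x y |distWithin G w A x root - distWithin G w A y root| := by
  obtain ⟨p, hp, hgeo⟩ := h.walkWithin_distWithin (w := w)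
  exact ⟨{z | z ∈ p.support}, hp, p.start_mem_support, p.end_mem_support,
    fun x hx y hy => walkWithin_support_abs_of_geodesic p hp hgeo hx hy⟩

theorem exists_skeleton [Finite V] (G : SimpleGraph V) (w : Sym2 V → ℝ≥0)
    (hC : ∀ u ∈ C, ∀ v ∈ C, Linked G C u v) {F : Finset V} (hF : (F : Set V) ⊆ C)
    (hroot : root ∈ F) : ∃ T, (F : Set V) ⊆ T ∧ IsSkeleton G w C T F.card := by
  classical
  have to_root {v} (hv : v ∈ C) : Linked G C v root := hC v hv root (hF hroot)
  have hleg : ∀ f ∈ F, ∃ L ⊆ C, f ∈ L ∧ root ∈ L ∧ ∀ x ∈ L, ∀ y ∈ L,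
      WalkWithin G w L x y |distWithin G w C x root - distWithin G w C y root| :=
    fun f hf => (to_root (hF hf)).exists_geodesic w
  choose! leg leg_subset mem_leg root_mem geodesic using hleg
  have subset_T {f} (hf : f ∈ F) : leg f ⊆ ⋃₀ (F.image leg : Set (Set V)) :=
    Set.subset_sUnion_of_mem (Finset.mem_coe.2 (Finset.mem_image_of_mem leg hf))
  have linked_root {x} (hx : x ∈ ⋃₀ (F.image leg : Set (Set V))) :
      Linked G (⋃₀ (F.image leg : Set (Set V))) x root := by
    obtain ⟨_, hL, hxL⟩ := hx
    obtain ⟨f, hf, rfl⟩ := Finset.mem_image.1 (Finset.mem_coe.1 hL)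
    exact (geodesic f hf x hxL root (root_mem f hf)).linked.mono (subset_T hf)
  refine ⟨_, fun v hv => subset_T hv (mem_leg v hv), fun v => distWithin G w C v root,
    F.image leg, Finset.card_image_le, rfl, ?_, fun v => distWithin_nonneg,
    fun u v c huv => ?_, ?_, fun x hx y hy => (linked_root hx).trans (linked_root hy).symm⟩
  · simpa only [Finset.coe_image, Finset.mem_coe, Set.sUnion_image, Set.iUnion_subset_iff]
      using leg_subset
  · exact add_comm c _ ▸ huv.distWithin_le_add (to_root huv.right_mem)
  · simpa only [Finset.mem_image, forall_exists_index, and_imp, forall_apply_eq_imp_iff₂]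
      using geodesic

theorem abs_sub_le_of_floor_div_eq {a b ε : ℝ} (ha : 0 ≤ a) (hb : 0 ≤ b) (hε : 0 < ε)
    (h : ⌊a / ε⌋₊ = ⌊b / ε⌋₊) : |a - b| ≤ ε := by
  have lower {s : ℝ} (hs : 0 ≤ s) : ⌊s / ε⌋₊ * ε ≤ s :=
    (le_div_iff₀ hε).1 (Nat.floor_le (by positivity))
  have upper (s : ℝ) : s < (⌊s / ε⌋₊ + 1) * ε := (div_lt_iff₀ hε).1 (Nat.lt_floor_add_one _)
  have hal := lower ha
  have hau := upper a
  rw [h] at hal hau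
  rw [abs_le]
  constructor <;> linarith [lower hb, upper b]

theorem floor_div_le_add {a b R ε : ℝ} (hε : 0 < ε) (h : a ≤ b + R) :
    ⌊a / ε⌋₊ ≤ ⌊b / ε⌋₊ + ⌊R / ε⌋₊ + 1 := by
  have hdiv : a / ε ≤ b / ε + R / ε := by
    rw [← add_div]
    gcongr
  have hlt : a / ε < (⌊b / ε⌋₊ + ⌊R / ε⌋₊ + 1 + 1 : ℕ) := by
    push_cast
    linarith [Nat.lt_floor_add_one (b / ε), Nat.lt_floor_add_one (R / ε)]
  exact Nat.lt_succ_iff.1 (Nat.floor_lt' (Nat.succ_ne_zero _) |>.2 hlt)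

theorem ncard_le_card_mul_of_injOn {α β : Type*} {B : Set α} {labels : Finset β} {label : α → β}
    {layer : α → ℕ} {n : ℕ} (hlabel : ∀ z ∈ B, label z ∈ labels)
    (hinj : Set.InjOn (fun z => (label z, layer z)) B)
    (hlayer : ∀ z ∈ B, ∀ z' ∈ B, layer z ≤ layer z' + n) :
    B.ncard ≤ labels.card * (n + 1) := by
  obtain rfl | hne := B.eq_empty_or_nonempty
  · simp
  obtain ⟨z₀, hz₀, hmin⟩ := exists_minimalFor_of_wellFoundedLT (· ∈ B) layer hne
  let window := labels ×ˢ Finset.Icc (layer z₀) (layer z₀ + n)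
  have maps_to : ∀ z ∈ B, (label z, layer z) ∈ (window : Set (β × ℕ)) := fun z hz =>
    Finset.mem_coe.2 (Finset.mem_product.2 ⟨hlabel z hz, Finset.mem_Icc.2
      ⟨(le_total (layer z₀) (layer z)).elim id (hmin hz), hlayer z hz z₀ hz₀⟩⟩)
  calc B.ncard ≤ (window : Set (β × ℕ)).ncard :=
        Set.ncard_le_ncard_of_injOn _ maps_to hinj (Finset.finite_toSet _)
    _ = labels.card * (n + 1) := by
        rw [Set.ncard_coe_finset, Finset.card_product, Nat.card_Icc]
        congr 1
        omega

/-- At most `n (⌊R / ε⌋ + 2)` points of `Z` are at pairwise distance at most `R` in `G[A]`. -/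
def IsSparse (G : SimpleGraph V) (w : Sym2 V → ℝ≥0) (A Z : Set V) (ε : ℝ) (n : ℕ) : Prop :=
  ∀ B ⊆ Z, ∀ R, (∀ z ∈ B, ∀ z' ∈ B, WalkWithin G w A z z' R) → B.ncard ≤ n * (⌊R / ε⌋₊ + 2)

/-- The net has one point for each leg and each layer of depth `ε`; points at bounded distance
lie in boundedly many consecutive layers. -/
theorem IsSkeleton.exists_net (hT : IsSkeleton G w A T k) {ε : ℝ} (hε : 0 < ε) :
    ∃ Z ⊆ T, (∀ x ∈ T, ∃ z ∈ Z, WalkWithin G w T x z ε) ∧ IsSparse G w A Z ε k := by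
  obtain ⟨depth, legs, hcard, rfl, -, depth_nonneg, depth_le, geodesic, -⟩ := hT
  let layer x := ⌊depth x / ε⌋₊
  have hrep : ∀ (L : Set V) (n : ℕ), (∃ x ∈ L, layer x = n) → ∃ x ∈ L, layer x = n := fun _ _ => id
  choose rep rep_mem layer_rep using hrep
  refine ⟨{z | ∃ L ∈ legs, ∃ n h, rep L n h = z}, ?_, ?_, fun B hB R hR => ?_⟩
  · rintro _ ⟨L, hL, n, h, rfl⟩
    exact ⟨L, hL, rep_mem L n h⟩
  · rintro x ⟨L, hL, hx⟩
    refine ⟨rep L (layer x) ⟨x, hx, rfl⟩, ⟨L, hL, _, _, rfl⟩, ?_⟩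
    exact (geodesic L hL x hx _ (rep_mem L _ _)).mono (Set.subset_sUnion_of_mem hL)
      (abs_sub_le_of_floor_div_eq (depth_nonneg _) (depth_nonneg _) hε (layer_rep L _ _).symm)
  · have hleg : ∀ z ∈ B, ∃ L ∈ legs, ∃ n h, rep L n h = z := fun z hz => hB hz
    choose! leg leg_mem hleg using hleg
    refine (ncard_le_card_mul_of_injOn leg_mem ?_ fun z hz z' hz' =>
      floor_div_le_add hε (depth_le z z' R (hR z hz z' hz'))).trans (Nat.mul_le_mul_right _ hcard)
    intro z hz z' hz' heq
    obtain ⟨n, h, hz_eq⟩ := hleg z hz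
    obtain ⟨n', h', hz'_eq⟩ := hleg z' hz'
    have hleg_eq : leg z = leg z' := congrArg Prod.fst heq
    have hn : n = n' := by
      rw [← layer_rep _ n h, hz_eq, ← layer_rep _ n' h', hz'_eq]
      exact congrArg Prod.snd heq
    subst hn
    rw [← hz_eq, ← hz'_eq]
    congr 1

end Skeleton

theorem hasCompleteMinor_of_finset {ι : Type*} {G : SimpleGraph V} {h : ℕ} {F : Finset ι}
    {B : ι → Set V} (hF : h ≤ F.card) (hne : ∀ i ∈ F, (B i).Nonempty)
    (hlinked : ∀ i ∈ F, ∀ u ∈ B i, ∀ v ∈ B i, Linked G (B i) u v)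
    (hdisj : ∀ i ∈ F, ∀ j ∈ F, i ≠ j → Disjoint (B i) (B j))
    (hadj : ∀ i ∈ F, ∀ j ∈ F, i ≠ j → ∃ u ∈ B i, ∃ v ∈ B j, G.Adj u v) : HasCompleteMinor G h := by
  let e (i : Fin h) : ι := (F.equivFin.symm (Fin.castLE hF i)).1
  have he i : e i ∈ F := (F.equivFin.symm (Fin.castLE hF i)).2
  have he_ne {i j} (hij : i ≠ j) : e i ≠ e j := fun heq =>
    hij (Fin.castLE_injective hF (F.equivFin.symm.injective (Subtype.ext heq)))
  refine ⟨B ∘ e, fun i => ?_, fun i j hij => hdisj _ (he i) _ (he j) (he_ne hij),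
    fun i j hij => hadj _ (he i) _ (he j) (he_ne hij)⟩
  have : Nonempty ((B ∘ e) i) := (hne _ (he i)).to_subtype
  refine ⟨fun x y => ?_⟩
  obtain ⟨p, hp⟩ := hlinked _ (he i) x x.2 y y.2
  exact ⟨p.induce _ hp⟩

section Descent

variable {ι : Type*} [LinearOrder ι] {S : ι → Finset ι} {a b t x : ι} {d e j : ℕ}

/-- The elements that can be reached from `a` by at most `d` steps, where a step leads from `x` to
an element of `S x`. -/
def descend (S : ι → Finset ι) : ℕ → ι → Finset ι
  | 0, a => {a}
  | d + 1, a => insert a ((S a).biUnion (descend S d))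

theorem self_mem_descend : a ∈ descend S d a := by
  cases d <;> simp [descend]

theorem mem_descend_succ_of_mem (hx : x ∈ S a) (hb : b ∈ descend S d x) :
    b ∈ descend S (d + 1) a :=
  Finset.mem_insert_of_mem (Finset.mem_biUnion.2 ⟨x, hx, hb⟩)

theorem mem_descend_succ : b ∈ descend S (d + 1) a ↔ b = a ∨ ∃ x ∈ S a, b ∈ descend S d x := by
  simp only [descend, Finset.mem_insert, Finset.mem_biUnion]

theorem mem_descend_of_le (hb : b ∈ descend S d a) (hde : d ≤ e) : b ∈ descend S e a := by
  induction e generalizing d a with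
  | zero => rwa [Nat.le_zero.1 hde] at hb
  | succ e ih =>
    cases d with
    | zero =>
      obtain rfl := Finset.mem_singleton.1 hb
      exact self_mem_descend
    | succ d =>
      rcases mem_descend_succ.1 hb with rfl | ⟨x, hx, hxb⟩
      · exact self_mem_descend
      · exact mem_descend_succ_of_mem hx (ih hxb (Nat.le_of_succ_le_succ hde))

/-- The steps to elements above `t` that are possible from the elements whose step set
contains `t`. -/
def stepsAbove (S : ι → Finset ι) (t a : ι) : Finset ι :=
  if t ∈ S a then {x ∈ S a | t < x} else ∅

theorem mem_stepsAbove : x ∈ stepsAbove S t a ↔ t ∈ S a ∧ x ∈ S a ∧ t < x := by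
  unfold stepsAbove
  split_ifs with ht <;> simp [ht]

theorem card_stepsAbove_le (hS : (S a).card ≤ j + 1) : (stepsAbove S t a).card ≤ j := by
  by_cases ht : t ∈ S a
  · have hssub : stepsAbove S t a ⊂ S a := (Finset.ssubset_iff_of_subset fun x hx =>
      (mem_stepsAbove.1 hx).2.1).2 ⟨t, ht, fun htt => lt_irrefl t (mem_stepsAbove.1 htt).2.2⟩
    exact Nat.lt_succ_iff.1 ((Finset.card_lt_card hssub).trans_le hS)
  · simp [stepsAbove, ht]

variable (hS : ∀ a, ∀ x ∈ S a, ∀ y ∈ S a, x < y → x ∈ S y)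
include hS

theorem mem_stepsAbove_of_lt (a : ι) : ∀ x ∈ stepsAbove S t a, ∀ y ∈ stepsAbove S t a, x < y →
    x ∈ stepsAbove S t y := by
  intro x hx y hy hxy
  rw [mem_stepsAbove] at hx hy ⊢
  exact ⟨hS a t hy.1 y hy.2.1 hy.2.2, hS a x hx.2.1 y hy.2.1 hxy, hx.2.2⟩

theorem descend_subset_union (ht : t ∈ S a) :
    descend S d a ⊆ descend (stepsAbove S t) d a ∪ descend S d t := by
  induction d generalizing a with
  | zero => exact Finset.subset_union_left
  | succ d ih =>
    intro b hb
    rw [Finset.mem_union]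
    rcases mem_descend_succ.1 hb with rfl | ⟨x, hx, hxb⟩
    · exact .inl self_mem_descend
    rcases lt_trichotomy x t with hlt | rfl | hgt
    · exact .inr (mem_descend_succ_of_mem (hS a x hx t ht hlt) hxb)
    · exact .inr (mem_descend_of_le hxb (Nat.le_succ d))
    · rcases Finset.mem_union.1 (ih (hS a t ht x hx hgt) hxb) with habove | hbelow
      · exact .inl (mem_descend_succ_of_mem (mem_stepsAbove.2 ⟨ht, hx, hgt⟩) habove)
      · exact .inr (mem_descend_of_le hbelow (Nat.le_succ d))

theorem descend_succ_subset_union (ht : t ∈ S a) (hmin : ∀ x ∈ S a, t ≤ x) :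
    descend S (d + 1) a ⊆ descend (stepsAbove S t) (d + 1) a ∪ descend S d t := by
  intro b hb
  rw [Finset.mem_union]
  rcases mem_descend_succ.1 hb with rfl | ⟨x, hx, hxb⟩
  · exact .inl self_mem_descend
  rcases (hmin x hx).eq_or_lt with rfl | hlt
  · exact .inr hxb
  rcases Finset.mem_union.1 (descend_subset_union hS (hS a t ht x hx hlt) hxb) with
    habove | hbelow
  · exact .inl (mem_descend_succ_of_mem (mem_stepsAbove.2 ⟨ht, hx, hlt⟩) habove)
  · exact .inr hbelow

/-- Pascal's rule: a descent either enters `t = min (S a)` within its first step or runs through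
elements whose step sets contain `t`, and the latter loses one element of each step set. -/
theorem card_descend_le (hcard : ∀ a, (S a).card ≤ j) :
    (descend S d a).card ≤ (d + j).choose j := by
  induction j generalizing S d a with
  | zero =>
    have hempty a : S a = ∅ := Finset.card_eq_zero.1 (Nat.le_zero.1 (hcard a))
    cases d <;> simp [descend, hempty]
  | succ j ih_card =>
    induction d generalizing a with
    | zero => simp [descend]
    | succ d ih_steps =>
      obtain hempty | hne := (S a).eq_empty_or_nonempty
      · have hpos : 1 ≤ (d + 1 + (j + 1)).choose (j + 1) := Nat.choose_pos (Nat.le_add_left _ _)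
        simpa [descend, hempty] using hpos
      have hcover := descend_succ_subset_union hS (d := d) ((S a).min'_mem hne)
        fun x hx => (S a).min'_le x hx
      calc (descend S (d + 1) a).card
          ≤ (descend (stepsAbove S ((S a).min' hne)) (d + 1) a).card
              + (descend S d ((S a).min' hne)).card :=
            (Finset.card_le_card hcover).trans (Finset.card_union_le _ _)
        _ ≤ (d + 1 + j).choose j + (d + 1 + j).choose (j + 1) :=
            add_le_add (ih_card (mem_stepsAbove_of_lt hS) fun a => card_stepsAbove_le (hcard a))
              (ih_steps.trans_eq (by rw [add_right_comm, add_assoc]))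
        _ = (d + 1 + (j + 1)).choose (j + 1) := (Nat.choose_succ_succ _ _).symm

end Descent

section FiniteWeights

variable {G : SimpleGraph V} {w : Sym2 V → ℝ≥0∞} {A X Y : Set V} {u v : V} {c r : ℝ}

/-- The edges of finite weight. -/
def finiteEdges (G : SimpleGraph V) (w : Sym2 V → ℝ≥0∞) : SimpleGraph V :=
  G.deleteEdges (w ⁻¹' {⊤})

theorem finiteEdges_adj : (finiteEdges G w).Adj u v ↔ G.Adj u v ∧ w s(u, v) ≠ ⊤ := by
  simp [finiteEdges]

theorem HasCompleteMinor.of_finiteEdges {h : ℕ} (hminor : HasCompleteMinor (finiteEdges G w) h) :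
    HasCompleteMinor G h := by
  obtain ⟨B, hconn, hdisj, hadj⟩ := hminor
  have hle : finiteEdges G w ≤ G := G.deleteEdges_le _
  refine ⟨B, fun i => (hconn i).mono (SimpleGraph.comap_monotone _ hle), hdisj, fun i j hij => ?_⟩
  obtain ⟨u, hu, v, hv, huv⟩ := hadj i j hij
  exact ⟨u, hu, v, hv, hle huv⟩

theorem exists_walk_induce {u v : V} (p : (finiteEdges G w).Walk u v)
    (hp : ∀ x ∈ p.support, x ∈ A) :
    ∃ q : (G.induce A).Walk ⟨u, hp u p.start_mem_support⟩ ⟨v, hp v p.end_mem_support⟩,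
      (q.edges.map fun e => w (e.map Subtype.val)).sum = cost (ENNReal.toNNReal ∘ w) p := by
  induction p with
  | nil => exact ⟨.nil, by simp⟩
  | cons huv p ih =>
    obtain ⟨huv, hfin⟩ := finiteEdges_adj.1 huv
    obtain ⟨q, hq⟩ := ih fun x hx => hp x (List.mem_cons_of_mem _ hx)
    refine ⟨.cons (SimpleGraph.induce_adj.2 huv) q, ?_⟩
    simp [hq, hfin]

theorem exists_walk_finiteEdges {a b : A} (q : (G.induce A).Walk a b)
    (hq : (q.edges.map fun e => w (e.map Subtype.val)).sum ≠ ⊤) :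
    ∃ p : (finiteEdges G w).Walk a b, (∀ x ∈ p.support, x ∈ A) ∧
      (cost (ENNReal.toNNReal ∘ w) p : ℝ≥0∞) =
        (q.edges.map fun e => w (e.map Subtype.val)).sum := by
  induction q with
  | nil => exact ⟨.nil, by simp, by simp⟩
  | @cons a a' b haa' q ih =>
    simp only [SimpleGraph.Walk.edges_cons, List.map_cons, List.sum_cons, Sym2.map_mk,
      ENNReal.add_ne_top] at hq ⊢
    obtain ⟨p, hp, hpc⟩ := ih hq.2
    have hadj : (finiteEdges G w).Adj a a' := finiteEdges_adj.2 ⟨haa', hq.1⟩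
    refine ⟨.cons hadj p, ?_, ?_⟩
    · simpa only [SimpleGraph.Walk.support_cons, List.mem_cons, forall_eq_or_imp] using
        ⟨a.2, hp⟩
    · rw [cost_cons, ENNReal.coe_add, hpc, Function.comp_apply, ENNReal.coe_toNNReal hq.1]

theorem WalkWithin.distOn_le
    (h : WalkWithin (finiteEdges G w) (ENNReal.toNNReal ∘ w) A u v c) :
    distOn G w A u v ≤ ENNReal.ofReal c := by
  obtain ⟨p, hp, hpc⟩ := h
  obtain ⟨q, hq⟩ := exists_walk_induce p hp
  refine (iInf_le_of_le (hp u p.start_mem_support) (iInf_le_of_le (hp v p.end_mem_support)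
    (iInf_le_of_le q hq.le))).trans ?_
  rw [← ENNReal.ofReal_coe_nnreal]
  exact ENNReal.ofReal_le_ofReal hpc

variable [Finite V]

theorem WalkWithin.of_distOn_le (hc : 0 ≤ c) (h : distOn G w A u v ≤ ENNReal.ofReal c) :
    WalkWithin (finiteEdges G w) (ENNReal.toNNReal ∘ w) A u v c := by
  refine walkWithin_of_forall_gt fun c' hc' => ?_
  have hlt : distOn G w A u v < ENNReal.ofReal c' :=
    h.trans_lt ((ENNReal.ofReal_lt_ofReal_iff (hc.trans_lt hc')).2 hc')
  simp only [distOn, iInf_lt_iff] at hlt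
  obtain ⟨hu, hv, q, hq⟩ := hlt
  obtain ⟨p, hp, hpc⟩ := exists_walk_finiteEdges q hq.ne_top
  rw [← hpc, ← ENNReal.ofReal_coe_nnreal] at hq
  exact ⟨p, hp, (ENNReal.ofReal_lt_ofReal_iff (hc.trans_lt hc')).1 hq |>.le⟩

theorem exists_walkWithin_of_setDistOn_le (hr : 0 ≤ r)
    (h : setDistOn G w A X Y ≤ ENNReal.ofReal r) :
    ∃ x ∈ X, ∃ y ∈ Y, WalkWithin (finiteEdges G w) (ENNReal.toNNReal ∘ w) A x y r := by
  obtain ⟨x₀, hx₀, y₀, hy₀, -⟩ : ∃ x ∈ X, ∃ y ∈ Y, distOn G w A x y < ⊤ := by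
    simpa only [setDistOn, iInf_lt_iff, exists_prop] using h.trans_lt ENNReal.ofReal_lt_top
  obtain ⟨⟨x, y⟩, ⟨hx, hy⟩, hmin⟩ := Set.exists_min_image (X ×ˢ Y)
    (fun p => distOn G w A p.1 p.2) (Set.toFinite _) ⟨(x₀, y₀), hx₀, hy₀⟩
  exact ⟨x, hx, y, hy, .of_distOn_le hr ((le_iInf₂ fun x' hx' => le_iInf₂ fun y' hy' =>
    hmin (x', y') ⟨hx', hy'⟩).trans h)⟩

end FiniteWeights

section Fibers

variable {α : Type*} [LinearOrder α] {key : V → α} {u v : V}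

/-- The order of the fibres of `key` by the values of `key`. -/
def FiberLE (key : V → α) (X Y : Set V) : Prop :=
  ∃ x ∈ X, ∃ y ∈ Y, key x ≤ key y

theorem fiberLE_fiber : FiberLE key {x | key x = key u} {x | key x = key v} ↔ key u ≤ key v := by
  constructor
  · rintro ⟨x, hx, y, hy, hxy⟩
    exact hx ▸ hy ▸ hxy
  · exact fun huv => ⟨u, rfl, v, rfl, huv⟩

theorem isLinearOrderOn_fiberLE : IsLinearOrderOn (Setoid.ker key).classes (FiberLE key) := by
  refine ⟨?_, ?_, ?_, ?_⟩
  · rintro _ ⟨u, rfl⟩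
    exact fiberLE_fiber.2 le_rfl
  · rintro _ ⟨u, rfl⟩ _ ⟨v, rfl⟩ huv hvu
    have hkey := le_antisymm (fiberLE_fiber.1 huv) (fiberLE_fiber.1 hvu)
    exact congrArg (fun k => {x | key x = k}) hkey
  · rintro _ ⟨u, rfl⟩ _ ⟨v, rfl⟩ _ ⟨x, rfl⟩ huv hvx
    exact fiberLE_fiber.2 ((fiberLE_fiber.1 huv).trans (fiberLE_fiber.1 hvx))
  · rintro _ ⟨u, rfl⟩ _ ⟨v, rfl⟩
    exact (le_total (key u) (key v)).imp fiberLE_fiber.2 fiberLE_fiber.2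

end Fibers

section Clusters

variable {α : Type*} {level : V → α} {ctr : V → V} {u v : V}

/-- The centres of the clusters containing a vertex `y` that can be reached from the cluster of `v`
by a walk of cost at most `r` along vertices whose level is at least that of `y`. -/
def reachableCenters (G : SimpleGraph V) (w : Sym2 V → ℝ≥0) [LE α] (level : V → α)
    (ctr : V → V) (r : ℝ) (v : V) : Set V :=
  {z | ∃ x y, ctr x = ctr v ∧ ctr y = z ∧ WalkWithin G w {t | level y ≤ level t} x y r}

variable [Finite V]

/-- Clusters, i.e. fibres of `ctr`, are ordered by level, and arbitrarily on each level. -/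
noncomputable def clusterKey (level : V → α) (ctr : V → V) (v : V) : α ×ₗ Fin (Nat.card V) :=
  toLex (level v, Finite.equivFin V (ctr v))

theorem level_le_of_clusterKey_le [LinearOrder α]
    (h : clusterKey level ctr u ≤ clusterKey level ctr v) : level u ≤ level v :=
  (Prod.Lex.toLex_le_toLex.1 h).elim le_of_lt fun h => h.1.le

variable (hlevel : ∀ v, level (ctr v) = level v)
include hlevel

theorem clusterKey_eq_iff : clusterKey level ctr u = clusterKey level ctr v ↔ ctr u = ctr v := by
  constructor
  · exact fun h => (Finite.equivFin V).injective (Prod.ext_iff.1 (toLex.injective h)).2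
  · intro h
    rw [clusterKey, clusterKey, ← hlevel u, ← hlevel v, h]

theorem clusterKey_fiber :
    {x | clusterKey level ctr x = clusterKey level ctr v} = {x | ctr x = ctr v} :=
  Set.ext fun _ => clusterKey_eq_iff hlevel

variable {G : SimpleGraph V} {w : Sym2 V → ℝ≥0∞}

theorem distOn_cluster_le {c : ℝ} (hctr : ∀ v,
      WalkWithin (finiteEdges G w) (ENNReal.toNNReal ∘ w) {x | ctr x = ctr v} v (ctr v) c) :
    ∀ X ∈ (Setoid.ker (clusterKey level ctr)).classes, ∀ u ∈ X, ∀ v ∈ X,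
      distOn G w X u v ≤ ENNReal.ofReal (c + c) := by
  rintro _ ⟨t, rfl⟩ u hu v hv
  have hX : {x | Setoid.ker (clusterKey level ctr) x t} = {x | ctr x = ctr t} :=
    clusterKey_fiber hlevel
  rw [hX] at hu hv ⊢
  have hradius {x} (hx : ctr x = ctr t) :
      WalkWithin (finiteEdges G w) (ENNReal.toNNReal ∘ w) {x | ctr x = ctr t} x (ctr t) c :=
    hx ▸ hctr x
  exact ((hradius hu).trans (hradius hv).symm).distOn_le

variable [LinearOrder α] {r : ℝ} {n : ℕ}

theorem mem_reachableCenters_of_wReach (hr : 0 ≤ r)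
    (h : WReach G w (Setoid.ker (clusterKey level ctr)).classes (FiberLE (clusterKey level ctr)) r
      {x | clusterKey level ctr x = clusterKey level ctr u}
      {x | clusterKey level ctr x = clusterKey level ctr v}) :
    ctr v ∈ reachableCenters (finiteEdges G w) (ENNReal.toNNReal ∘ w) level ctr r u := by
  obtain ⟨x, hx, y, hy, hwalk⟩ := exists_walkWithin_of_setDistOn_le hr h
  rw [clusterKey_fiber hlevel] at hx hy
  refine ⟨x, y, hx, hy, hwalk.mono ?_ le_rfl⟩
  rintro t ⟨_, ⟨⟨t', rfl⟩, hle⟩, ht⟩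
  have hkey : clusterKey level ctr y ≤ clusterKey level ctr t :=
    ((clusterKey_eq_iff hlevel).2 hy).trans_le ((fiberLE_fiber.1 hle).trans_eq (Eq.symm ht))
  exact level_le_of_clusterKey_le hkey

theorem wcol_le (hr : 0 ≤ r)
    (hn : ∀ u,
      (reachableCenters (finiteEdges G w) (ENNReal.toNNReal ∘ w) level ctr r u).ncard ≤ n) :
    wcol G w (Setoid.ker (clusterKey level ctr)).classes (FiberLE (clusterKey level ctr)) r ≤
      n := by
  refine ciSup_le' fun X => ciSup_le' ?_
  rintro ⟨u, rfl⟩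
  refine (Set.ncard_le_ncard ?_ (Set.toFinite _)).trans
    ((Set.ncard_image_le (f := fun z => {x | ctr x = z}) (Set.toFinite _)).trans (hn u))
  rintro _ ⟨⟨v, rfl⟩, hreach⟩
  exact ⟨ctr v, mem_reachableCenters_of_wReach hlevel hr hreach, (clusterKey_fiber hlevel).symm⟩

end Clusters

/-- A stage of the construction of the supernodes `0, …, count - 1`. Vertex `v` belongs to the
supernode `node v`, and is still unassigned if `node v = ⊤`. When supernode `t` is created,
`domain t` is the component of unassigned vertices it is carved out of, `seen t` is the set of the
earlier supernodes adjacent to this component, and `skeleton t` is the initial content of `t`. -/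
structure State (V : Type) where
  node : V → ℕ∞
  count : ℕ
  seen : ℕ → Finset ℕ
  domain : ℕ → Set V
  skeleton : ℕ → Set V

namespace State

variable {G : SimpleGraph V} {w : Sym2 V → ℝ≥0} {γ : ℝ} {h : ℕ} {s s' : State V} {t X : ℕ}
  {u v : V}

/-- The unassigned vertices. -/
def free (s : State V) : Set V := {v | s.node v = ⊤}

/-- The vertices of supernode `t`. -/
def cell (s : State V) (t : ℕ) : Set V := {v | s.node v = t}

/-- The vertices that are unassigned or belong to a supernode created no earlier than `t`. -/
def above (s : State V) (t : ℕ) : Set V := {v | t ≤ s.node v}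

/-- The vertices that can be reached from supernode `t` through unassigned vertices; `t` will never
contain any other vertex. -/
def shadow (G : SimpleGraph V) (s : State V) (t : ℕ) : Set V :=
  {v | ∃ q ∈ s.cell t, Linked G (s.free ∪ s.cell t) v q}

/-- The component of the unassigned vertex `u` is at distance more than `γ` from the shadow of `X`,
in the subgraph of vertices above `X`. -/
def Buffered (G : SimpleGraph V) (w : Sym2 V → ℝ≥0) (γ : ℝ) (s : State V) (u : V) (X : ℕ) : Prop :=
  ∀ u', Linked G s.free u u' → ∀ x ∈ s.shadow G X, ¬ WalkWithin G w (s.above X) u' x γ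

theorem cell_subset_shadow : s.cell t ⊆ s.shadow G t :=
  fun v hv => ⟨v, hv, .refl (.inr hv)⟩

theorem free_subset_above : s.free ⊆ s.above t :=
  fun _ hv => (le_top : _ ≤ ⊤).trans_eq (Eq.symm hv)

theorem mem_shadow_of_adj (hu : u ∈ s.shadow G t) (hv : v ∈ s.free) (huv : G.Adj u v) :
    v ∈ s.shadow G t := by
  obtain ⟨q, hq, hlinked⟩ := hu
  exact ⟨q, hq, (Linked.of_adj (.inl hv) hlinked.left_mem huv.symm).trans hlinked⟩

theorem mem_shadow_of_linked (hu : u ∈ s.shadow G t) (huv : Linked G s.free u v) :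
    v ∈ s.shadow G t := by
  obtain ⟨q, hq, hlinked⟩ := hu
  exact ⟨q, hq, (huv.symm.mono Set.subset_union_left).trans hlinked⟩

theorem Buffered.of_linked (hu : s.Buffered G w γ u X) (huv : Linked G s.free u v) :
    s.Buffered G w γ v X :=
  fun u' hvu' => hu u' (huv.trans hvu')

/-- `s'` is a later stage than `s`. The supernodes of `s` have only absorbed vertices of their
shadows. -/
structure Extends (G : SimpleGraph V) (s s' : State V) : Prop where
  count_le : s.count ≤ s'.count
  node_eq : ∀ v, s.node v ≠ ⊤ → s'.node v = s.node v
  seen_eq : ∀ t < s.count, s'.seen t = s.seen t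
  domain_eq : ∀ t < s.count, s'.domain t = s.domain t
  skeleton_eq : ∀ t < s.count, s'.skeleton t = s.skeleton t
  mem_shadow : ∀ v, ∀ t < s.count, s.node v = ⊤ → s'.node v = t → v ∈ s.shadow G t

namespace Extends

theorem free_subset (E : Extends G s s') : s'.free ⊆ s.free :=
  fun v hv => by_contra fun hne => hne ((E.node_eq v hne).symm.trans hv)

theorem cell_subset (E : Extends G s s') : s.cell t ⊆ s'.cell t := by
  intro v hv
  have hne : s.node v ≠ ⊤ := by
    rw [show s.node v = t from hv]
    exact ENat.natCast_ne_top t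
  exact (E.node_eq v hne).trans hv

theorem above_subset (E : Extends G s s') : s'.above t ⊆ s.above t := by
  intro v hv
  by_cases hfree : s.node v = ⊤
  · exact free_subset_above hfree
  · exact (show (t : ℕ∞) ≤ s'.node v from hv).trans_eq (E.node_eq v hfree)

theorem shadow_subset (E : Extends G s s') (ht : t < s.count) : s'.shadow G t ⊆ s.shadow G t := by
  have cell_subset : s'.cell t ⊆ s.shadow G t := by
    intro v hv
    by_cases hfree : s.node v = ⊤
    · exact E.mem_shadow v t ht hfree hv
    · exact cell_subset_shadow ((E.node_eq v hfree).symm.trans hv)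
  rintro v ⟨q, hq, hvq⟩
  refine (hvq.symm.restrict (fun a ha b hb hab => ?_) (cell_subset hq)).right_mem
  exact hb.elim (fun hb => mem_shadow_of_adj ha (E.free_subset hb) hab) fun hb => cell_subset hb

theorem buffered (E : Extends G s s') (hX : X < s.count) (hu : s.Buffered G w γ u X) :
    s'.Buffered G w γ u X := fun u' huu' x hx hwalk =>
  hu u' (huu'.mono E.free_subset) x (E.shadow_subset hX hx) (hwalk.mono E.above_subset le_rfl)

end Extends

/-- The properties that supernode `t` has from its creation on. The quantity `γ` is the width of
the buffer separating `t` from the earlier supernodes that it does not see. -/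
structure IsSupernode (G : SimpleGraph V) (w : Sym2 V → ℝ≥0) (γ : ℝ) (h : ℕ) (s : State V)
    (t : ℕ) : Prop where
  lt_of_mem_seen : ∀ X ∈ s.seen t, X < t
  card_seen : (s.seen t).card + 2 ≤ h
  mem_seen_of_lt : ∀ X ∈ s.seen t, ∀ Y ∈ s.seen t, X < Y → X ∈ s.seen Y
  exists_adj : ∀ X ∈ s.seen t, ∃ a ∈ s.cell t, ∃ b ∈ s.cell X, G.Adj a b
  shadow_subset : s.shadow G t ⊆ s.domain t
  mem_seen_of_mem_shadow : ∀ u ∈ s.domain t, ∀ X < t, u ∈ s.shadow G X → X ∈ s.seen t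
  boundary : ∀ u ∈ s.domain t, ∀ v ∉ s.domain t, G.Adj u v → ∃ X ∈ s.seen t, v ∈ s.cell X
  buffer : ∀ u ∈ s.domain t, ∀ X < t, X ∉ s.seen t → ∀ x ∈ s.shadow G X,
    ¬ WalkWithin G w (s.above X) u x γ
  skeleton_subset : s.skeleton t ⊆ s.cell t
  isSkeleton : IsSkeleton G w (s.domain t) (s.skeleton t) (h - 1)

theorem IsSupernode.extend (S : IsSupernode G w γ h s t) (E : Extends G s s') (ht : t < s.count) :
    IsSupernode G w γ h s' t := by
  have hseen := E.seen_eq t ht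
  have hdomain := E.domain_eq t ht
  have hskel := E.skeleton_eq t ht
  constructor
  · simpa only [hseen] using S.lt_of_mem_seen
  · simpa only [hseen] using S.card_seen
  · rw [hseen]
    intro X hX Y hY hXY
    rw [E.seen_eq Y ((S.lt_of_mem_seen Y hY).trans ht)]
    exact S.mem_seen_of_lt X hX Y hY hXY
  · rw [hseen]
    intro X hX
    obtain ⟨a, ha, b, hb, hab⟩ := S.exists_adj X hX
    exact ⟨a, E.cell_subset ha, b, E.cell_subset hb, hab⟩
  · exact hdomain ▸ (E.shadow_subset ht).trans S.shadow_subset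
  · rw [hseen, hdomain]
    exact fun u hu X hX huX => S.mem_seen_of_mem_shadow u hu X hX
      (E.shadow_subset (hX.trans ht) huX)
  · rw [hseen, hdomain]
    intro u hu v hv huv
    obtain ⟨X, hX, hvX⟩ := S.boundary u hu v hv huv
    exact ⟨X, hX, E.cell_subset hvX⟩
  · rw [hseen, hdomain]
    exact fun u hu X hXt hX x hx hwalk => S.buffer u hu X hXt hX x
      (E.shadow_subset (hXt.trans ht) hx) (hwalk.mono E.above_subset le_rfl)
  · exact hskel ▸ S.skeleton_subset.trans E.cell_subset
  · exact hskel ▸ hdomain ▸ S.isSkeleton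

/-- Vertex `v` of supernode `t` is joined to the skeleton by a walk inside `t` of cost `γ` for each
of certain seen supernodes `X ∈ M`, and `v` has paid this price only to buffer its unassigned
neighbours from `X`. -/
def Anchored (G : SimpleGraph V) (w : Sym2 V → ℝ≥0) (γ : ℝ) (s : State V) (v : V) (t : ℕ) : Prop :=
  ∃ M ⊆ s.seen t, (∃ z ∈ s.skeleton t, WalkWithin G w (s.cell t) v z (γ * M.card)) ∧
    ∀ u ∈ s.free, G.Adj v u → ∀ X ∈ M, s.Buffered G w γ u X

theorem Anchored.extend (hv : s.Anchored G w γ v t) (E : Extends G s s') (ht : t < s.count)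
    (hseen : ∀ X ∈ s.seen t, X < t) : s'.Anchored G w γ v t := by
  obtain ⟨M, hM, ⟨z, hz, hwalk⟩, hbuf⟩ := hv
  refine ⟨M, (E.seen_eq t ht).symm ▸ hM, ⟨z, (E.skeleton_eq t ht).symm ▸ hz,
    hwalk.mono E.cell_subset le_rfl⟩, fun u hu hvu X hX => ?_⟩
  exact E.buffered ((hseen X (hM hX)).trans ht) (hbuf u (E.free_subset hu) hvu X hX)

/-- The invariant maintained by the construction. -/
structure Invariant (G : SimpleGraph V) (w : Sym2 V → ℝ≥0) (γ : ℝ) (h : ℕ) (s : State V) :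
    Prop where
  lt_count : ∀ v t, v ∈ s.cell t → t < s.count
  seen_eq_empty : ∀ t ≥ s.count, s.seen t = ∅
  isSupernode : ∀ t < s.count, IsSupernode G w γ h s t
  anchored : ∀ v t, v ∈ s.cell t → s.Anchored G w γ v t

namespace Invariant

theorem extend (I : Invariant G w γ h s) (E : Extends G s s')
    (hlt : ∀ v ∈ s.free, ∀ t, v ∈ s'.cell t → t < s'.count)
    (hempty : ∀ t ≥ s'.count, s'.seen t = ∅)
    (hsuper : ∀ t ≥ s.count, t < s'.count → IsSupernode G w γ h s' t)
    (hanch : ∀ v ∈ s.free, ∀ t, v ∈ s'.cell t → s'.Anchored G w γ v t) :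
    Invariant G w γ h s' where
  lt_count v t hv := by
    by_cases hfree : s.node v = ⊤
    · exact hlt v hfree t hv
    · exact (I.lt_count v t ((E.node_eq v hfree).symm.trans hv)).trans_le E.count_le
  seen_eq_empty := hempty
  isSupernode t ht :=
    (lt_or_ge t s.count).elim (fun hts => (I.isSupernode t hts).extend E hts)
      fun hts => hsuper t hts ht
  anchored v t hv := by
    by_cases hfree : s.node v = ⊤
    · exact hanch v hfree t hv
    · have hvs : v ∈ s.cell t := (E.node_eq v hfree).symm.trans hv
      have ht := I.lt_count v t hvs
      exact (I.anchored v t hvs).extend E ht (I.isSupernode t ht).lt_of_mem_seen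

end Invariant

section Absorb

variable {a b k x : V} {c : ℝ} {root : V → V}

/-- The assigned vertices above `X` that are adjacent to the component of `u`. -/
def rim (G : SimpleGraph V) (s : State V) (u : V) (X : ℕ) : Set V :=
  {b ∈ s.above X | b ∉ component G s.free u ∧ ∃ a ∈ component G s.free u, G.Adj a b}

/-- The vertices in the component of `u` that are at distance at most `γ` from its `X`-rim. -/
def absorbed (G : SimpleGraph V) (w : Sym2 V → ℝ≥0) (γ : ℝ) (s : State V) (u : V) (X : ℕ) : Set V :=
  {v ∈ component G s.free u | ∃ k ∈ s.rim G u X,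
    WalkWithin G w (component G s.free u ∪ s.rim G u X) v k γ}

open Classical in
/-- The state in which each vertex `v` near the `X`-rim has joined the supernode of `root v`. -/
noncomputable def absorb (G : SimpleGraph V) (w : Sym2 V → ℝ≥0) (γ : ℝ) (s : State V) (u : V)
    (X : ℕ) (root : V → V) : State V :=
  { s with node := fun v => if v ∈ s.absorbed G w γ u X then s.node (root v) else s.node v }

theorem exists_mem_cell (hv : v ∉ s.free) : ∃ t, v ∈ s.cell t :=
  let ⟨t, ht⟩ := ENat.ne_top_iff_exists.1 hv
  ⟨t, ht.symm⟩

theorem notMem_free_of_mem_cell (hv : v ∈ s.cell t) : v ∉ s.free := fun hfree =>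
  ENat.natCast_ne_top t (Eq.trans (Eq.symm hv) hfree)

theorem notMem_free_of_adj_component (ha : a ∈ component G s.free u) (hab : G.Adj a b)
    (hb : b ∉ component G s.free u) : b ∉ s.free :=
  fun hfree => hb (mem_component_of_adj ha hfree hab)

theorem notMem_free_of_mem_rim (hb : b ∈ s.rim G u X) : b ∉ s.free := by
  obtain ⟨-, hbC, a, ha, hab⟩ := hb
  exact notMem_free_of_adj_component ha hab hbC

theorem component_subset_shadow (ha : a ∈ component G s.free u) (hab : G.Adj a b)
    (hb : b ∈ s.cell t) : component G s.free u ⊆ s.shadow G t := fun _ hv =>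
  mem_shadow_of_linked (mem_shadow_of_adj (cell_subset_shadow hb) ha.right_mem hab.symm)
    (ha.symm.trans hv)

theorem exists_walkWithin_rim (huX : u ∉ s.shadow G X) (hv : v ∈ component G s.free u)
    (hx : x ∈ s.shadow G X) (hwalk : WalkWithin G w (s.above X) v x c) :
    ∃ k ∈ s.rim G u X, WalkWithin G w (component G s.free u ∪ s.rim G u X) v k c := by
  have hxC : x ∉ component G s.free u := fun hux => huX (mem_shadow_of_linked hx hux.symm)
  obtain ⟨a, ha, b, hb, hbC, hab, hvb⟩ := hwalk.exists_exit hv hxC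
  have hbK : b ∈ s.rim G u X := ⟨hb, hbC, a, ha, hab⟩
  exact ⟨b, hbK, hvb.mono (Set.insert_subset (.inr hbK) Set.subset_union_left) le_rfl⟩

theorem absorbed_nonempty (huX : u ∉ s.shadow G X) (hunbuf : ¬ s.Buffered G w γ u X) :
    (s.absorbed G w γ u X).Nonempty := by
  simp only [Buffered, not_forall, not_not] at hunbuf
  obtain ⟨v, hv, x, hx, hwalk⟩ := hunbuf
  exact ⟨v, hv, exists_walkWithin_rim huX hv hx hwalk⟩

theorem Invariant.mem_seen_of_not_buffered (I : Invariant G w γ h s) (ht : t < s.count)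
    (hXt : X < t) (hut : u ∈ s.shadow G t) (hunbuf : ¬ s.Buffered G w γ u X) : X ∈ s.seen t := by
  by_contra hX
  refine hunbuf fun u' huu' x hx hwalk => ?_
  exact (I.isSupernode t ht).buffer u'
    ((I.isSupernode t ht).shadow_subset (mem_shadow_of_linked hut huu')) X hXt hX x hx hwalk

theorem Invariant.exists_of_mem_rim (I : Invariant G w γ h s) (huX : u ∉ s.shadow G X)
    (hunbuf : ¬ s.Buffered G w γ u X) (hb : b ∈ s.rim G u X) :
    ∃ t, b ∈ s.cell t ∧ X ∈ s.seen t ∧ component G s.free u ⊆ s.shadow G t := by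
  obtain ⟨t, hbt⟩ := exists_mem_cell (notMem_free_of_mem_rim hb)
  obtain ⟨hXb, -, a, ha, hab⟩ := hb
  have hC := component_subset_shadow ha hab hbt
  have hut : u ∈ s.shadow G t := hC (.refl ha.left_mem)
  have hXt : X ≤ t := ENat.natCast_le_natCast.1 (hXb.trans_eq hbt)
  have hne : X ≠ t := fun heq => huX (heq ▸ hut)
  exact ⟨t, hbt, I.mem_seen_of_not_buffered (I.lt_count b t hbt) (hXt.lt_of_ne hne) hut hunbuf, hC⟩

theorem absorb_node_of_mem (hv : v ∈ s.absorbed G w γ u X) :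
    (s.absorb G w γ u X root).node v = s.node (root v) := if_pos hv

theorem absorb_node_of_notMem (hv : v ∉ s.absorbed G w γ u X) :
    (s.absorb G w γ u X root).node v = s.node v := if_neg hv

theorem absorbed_subset_free : s.absorbed G w γ u X ⊆ s.free := fun _ hv => hv.1.right_mem

theorem mem_absorbed_of_mem_cell (hv : v ∈ s.free) (hvt : v ∈ (s.absorb G w γ u X root).cell t) :
    v ∈ s.absorbed G w γ u X := by
  by_contra habs
  exact notMem_free_of_mem_cell ((absorb_node_of_notMem habs).symm.trans hvt) hv

section Root

variable (hroot : IsVoronoi G w (component G s.free u ∪ s.rim G u X) (s.rim G u X) root)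
include hroot

theorem root_mem_rim_of_mem_absorbed (hv : v ∈ s.absorbed G w γ u X) : root v ∈ s.rim G u X :=
  let ⟨k, hk, hwalk⟩ := hv.2
  hroot.root_mem v k hk hwalk.linked

theorem notMem_absorbed_of_mem_free (hv : v ∈ (s.absorb G w γ u X root).free) :
    v ∉ s.absorbed G w γ u X := fun habs =>
  notMem_free_of_mem_rim (root_mem_rim_of_mem_absorbed hroot habs)
    ((absorb_node_of_mem habs).symm.trans hv)

theorem free_absorb_ssubset (huX : u ∉ s.shadow G X) (hunbuf : ¬ s.Buffered G w γ u X) :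
    (s.absorb G w γ u X root).free ⊂ s.free := by
  obtain ⟨v, hv⟩ := absorbed_nonempty huX hunbuf
  refine Set.ssubset_iff_of_subset (fun x hx => ?_) |>.2
    ⟨v, absorbed_subset_free hv, fun hfree => notMem_absorbed_of_mem_free hroot hfree hv⟩
  exact (absorb_node_of_notMem (notMem_absorbed_of_mem_free hroot hx)).symm.trans hx

theorem Invariant.extends_absorb (I : Invariant G w γ h s) (huX : u ∉ s.shadow G X)
    (hunbuf : ¬ s.Buffered G w γ u X) : Extends G s (s.absorb G w γ u X root) where
  count_le := le_rfl
  node_eq v hv := absorb_node_of_notMem fun habs => hv (absorbed_subset_free habs)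
  seen_eq _ _ := rfl
  domain_eq _ _ := rfl
  skeleton_eq _ _ := rfl
  mem_shadow v t _ hfree hvt := by
    have habs := mem_absorbed_of_mem_cell hfree hvt
    obtain ⟨t', ht', -, hC⟩ :=
      I.exists_of_mem_rim huX hunbuf (root_mem_rim_of_mem_absorbed hroot habs)
    obtain rfl : t' = t :=
      ENat.natCast_inj.1 (ht'.symm.trans ((absorb_node_of_mem habs).symm.trans hvt))
    exact hC habs.1

theorem buffered_absorb (E : Extends G s (s.absorb G w γ u X root)) (hX : X < s.count)
    (huX : u ∉ s.shadow G X) (hv : v ∈ component G s.free u) :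
    (s.absorb G w γ u X root).Buffered G w γ v X := by
  intro v' hvv' x hx hwalk
  have hv' : v' ∈ component G s.free u := hv.trans (hvv'.mono E.free_subset)
  exact notMem_absorbed_of_mem_free hroot hvv'.right_mem
    ⟨hv', exists_walkWithin_rim huX hv' (E.shadow_subset hX hx)
      (hwalk.mono E.above_subset le_rfl)⟩

theorem walkWithin_cell_absorb (hv : v ∈ s.absorbed G w γ u X) (ht : root v ∈ s.cell t) :
    WalkWithin G w ((s.absorb G w γ u X root).cell t) v (root v) γ := by
  obtain ⟨k, hk, hwalk⟩ := hv.2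
  refine (hroot.walkWithin v k hk γ hwalk).to_ball.mono (fun x hx => ?_) le_rfl
  obtain ⟨hxA, hxv⟩ := hx.left_mem
  rcases hxA with hxC | hxK
  · have habs : x ∈ s.absorbed G w γ u X :=
      ⟨hxC, root v, hroot.root_mem v k hk hwalk.linked, hx.mono (fun _ hy => hy.1) le_rfl⟩
    exact (absorb_node_of_mem habs).trans (hxv ▸ ht)
  · have hnot : x ∉ s.absorbed G w γ u X :=
      fun habs => notMem_free_of_mem_rim hxK (absorbed_subset_free habs)
    exact (absorb_node_of_notMem hnot).trans (hroot.root_eq x hxK ▸ hxv ▸ ht)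

theorem Invariant.anchored_absorb (I : Invariant G w γ h s) (hX : X < s.count)
    (huX : u ∉ s.shadow G X) (hunbuf : ¬ s.Buffered G w γ u X) (hv : v ∈ s.absorbed G w γ u X)
    (ht : root v ∈ s.cell t) : (s.absorb G w γ u X root).Anchored G w γ v t := by
  have E := I.extends_absorb hroot huX hunbuf
  have hk := root_mem_rim_of_mem_absorbed hroot hv
  obtain ⟨M, hM, ⟨z, hz, hwalk⟩, hbuf⟩ := I.anchored (root v) t ht
  have htn := I.lt_count (root v) t ht
  have hXt : X ∈ s.seen t := by
    obtain ⟨t', ht', hX', -⟩ := I.exists_of_mem_rim huX hunbuf hk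
    rwa [← ENat.natCast_inj.1 (ht'.symm.trans ht)]
  obtain ⟨-, -, a, ha, hak⟩ := hk
  have hM_buffered : ∀ Y ∈ M, s.Buffered G w γ u Y := fun Y hY =>
    (hbuf a ha.right_mem hak.symm Y hY).of_linked ha.symm
  have hXM : X ∉ M := fun hXM => hunbuf (hM_buffered X hXM)
  refine ⟨insert X M, Finset.insert_subset hXt hM, ⟨z, hz, ?_⟩, fun y hy hvy Y hY => ?_⟩
  · rw [Finset.card_insert_of_notMem hXM]
    refine ((walkWithin_cell_absorb hroot hv ht).trans
      (hwalk.mono E.cell_subset le_rfl)).mono_cost (le_of_eq ?_)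
    push_cast
    ring
  · have hyC := mem_component_of_adj hv.1 (E.free_subset hy) hvy
    rcases Finset.mem_insert.1 hY with rfl | hYM
    · exact buffered_absorb hroot E hX huX hyC
    · exact E.buffered (((I.isSupernode t htn).lt_of_mem_seen Y (hM hYM)).trans htn)
        ((hM_buffered Y hYM).of_linked hyC)

end Root

theorem Invariant.exists_absorb [Finite V] (I : Invariant G w γ h s) (hX : X < s.count)
    (huX : u ∉ s.shadow G X) (hunbuf : ¬ s.Buffered G w γ u X) :
    ∃ s' : State V, Invariant G w γ h s' ∧ s'.free ⊂ s.free := by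
  obtain ⟨root, hroot⟩ := exists_isVoronoi G w
    (Set.subset_union_right (s := component G s.free u) (t := s.rim G u X))
  have E := I.extends_absorb hroot huX hunbuf
  have root_mem_cell {v t} (hv : v ∈ s.free) (hvt : v ∈ (s.absorb G w γ u X root).cell t) :
      root v ∈ s.cell t :=
    (absorb_node_of_mem (mem_absorbed_of_mem_cell hv hvt)).symm.trans hvt
  refine ⟨s.absorb G w γ u X root, I.extend E (fun v hv t hvt => ?_) I.seen_eq_empty
    (fun t hle hlt => absurd hlt hle.not_gt) (fun v hv t hvt => ?_),
    free_absorb_ssubset hroot huX hunbuf⟩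
  · exact I.lt_count _ t (root_mem_cell hv hvt)
  · exact I.anchored_absorb hroot hX huX hunbuf (mem_absorbed_of_mem_cell hv hvt)
      (root_mem_cell hv hvt)

end Absorb

section Create

variable {T : Set V}

open Classical in
/-- The supernodes seen by the component of the unassigned vertex `u`. -/
noncomputable def visible (G : SimpleGraph V) (s : State V) (u : V) : Finset ℕ :=
  {X ∈ Finset.range s.count | u ∈ s.shadow G X}

open Classical in
/-- The state in which a new supernode with vertex set `T` has been created in the component
of `u`. -/
noncomputable def create (G : SimpleGraph V) (s : State V) (u : V) (T : Set V) : State V where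
  node v := if v ∈ T then s.count else s.node v
  count := s.count + 1
  seen := Function.update s.seen s.count (s.visible G u)
  domain := Function.update s.domain s.count (component G s.free u)
  skeleton := Function.update s.skeleton s.count T

theorem mem_visible : X ∈ s.visible G u ↔ X < s.count ∧ u ∈ s.shadow G X := by
  simp [visible]

theorem exists_adj_of_mem_shadow (hu : u ∈ s.free) (huX : u ∈ s.shadow G X) :
    ∃ a ∈ component G s.free u, ∃ b ∈ s.cell X, G.Adj a b := by
  obtain ⟨q, hq, hlinked⟩ := huX
  obtain ⟨_, hwalk⟩ := hlinked.exists_walkWithin 0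
  obtain ⟨a, ha, b, hb, hbC, hab, -⟩ := hwalk.exists_exit (C := component G s.free u)
    (.refl hu) fun hqC => notMem_free_of_mem_cell hq (component_subset hqC)
  exact ⟨a, ha, b, hb.resolve_left (notMem_free_of_adj_component ha hab hbC), hab⟩

namespace Invariant

theorem linked_cell (I : Invariant G w γ h s) (hu : u ∈ s.cell t) (hv : v ∈ s.cell t) :
    Linked G (s.cell t) u v := by
  have S := I.isSupernode t (I.lt_count u t hu)
  obtain ⟨_, -, ⟨z, hz, huz⟩, -⟩ := I.anchored u t hu
  obtain ⟨_, -, ⟨z', hz', hvz'⟩, -⟩ := I.anchored v t hv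
  exact (huz.linked.trans ((S.isSkeleton.linked hz hz').mono S.skeleton_subset)).trans
    hvz'.linked.symm

theorem mem_seen_of_mem_visible (I : Invariant G w γ h s) {Y : ℕ} (hX : X ∈ s.visible G u)
    (hY : Y ∈ s.visible G u) (hXY : X < Y) : X ∈ s.seen Y := by
  rw [mem_visible] at hX hY
  have S := I.isSupernode Y hY.1
  exact S.mem_seen_of_mem_shadow u (S.shadow_subset hY.2) X hXY hX.2

theorem exists_adj_of_mem_visible (I : Invariant G w γ h s) {Y : ℕ} (hX : X ∈ s.visible G u)
    (hY : Y ∈ s.visible G u) (hne : X ≠ Y) : ∃ a ∈ s.cell X, ∃ b ∈ s.cell Y, G.Adj a b := by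
  have of_lt {X Y} (hX : X ∈ s.visible G u) (hY : Y ∈ s.visible G u) (hXY : X < Y) :
      ∃ a ∈ s.cell Y, ∃ b ∈ s.cell X, G.Adj a b :=
    (I.isSupernode Y (mem_visible.1 hY).1).exists_adj X (I.mem_seen_of_mem_visible hX hY hXY)
  rcases hne.lt_or_gt with hlt | hlt
  · obtain ⟨a, ha, b, hb, hab⟩ := of_lt hX hY hlt
    exact ⟨b, hb, a, ha, hab.symm⟩
  · exact of_lt hY hX hlt

/-- The visible supernodes together with the component of `u` are the branch sets of a complete
minor. -/
theorem card_visible (I : Invariant G w γ h s) (hminor : ¬ HasCompleteMinor G h)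
    (hu : u ∈ s.free) : (s.visible G u).card + 2 ≤ h := by
  by_contra! hlt
  have hC_adj {X} (hX : X ∈ s.visible G u) :=
    exists_adj_of_mem_shadow hu (mem_visible.1 hX).2
  have hC_disj X : Disjoint (component G s.free u) (s.cell X) := Set.disjoint_left.2
    fun _ hvC hvX => notMem_free_of_mem_cell hvX (component_subset hvC)
  refine hminor (hasCompleteMinor_of_finset (F := (s.visible G u).insertNone)
    (B := fun i => i.elim (component G s.free u) s.cell)
    (by rw [Finset.card_insertNone]; omega) ?_ ?_ ?_ ?_)
  · rintro (_ | X) hX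
    · exact ⟨u, .refl hu⟩
    · obtain ⟨-, -, b, hb, -⟩ := hC_adj (Finset.some_mem_insertNone.1 hX)
      exact ⟨b, hb⟩
  · rintro (_ | X) -
    · exact fun _ hv _ hv' => linked_component hv hv'
    · exact fun _ hv _ hv' => I.linked_cell hv hv'
  · rintro (_ | X) - (_ | Y) - hne
    · exact absurd rfl hne
    · exact hC_disj Y
    · exact (hC_disj X).symm
    · exact Set.disjoint_left.2 fun v hvX hvY =>
        hne (congrArg some (ENat.natCast_inj.1 ((Eq.symm hvX).trans hvY)))
  · rintro (_ | X) hX (_ | Y) hY hne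
    · exact absurd rfl hne
    · exact hC_adj (Finset.some_mem_insertNone.1 hY)
    · obtain ⟨a, ha, b, hb, hab⟩ := hC_adj (Finset.some_mem_insertNone.1 hX)
      exact ⟨b, hb, a, ha, hab.symm⟩
    · exact I.exists_adj_of_mem_visible (Finset.some_mem_insertNone.1 hX)
        (Finset.some_mem_insertNone.1 hY) fun heq => hne (congrArg some heq)

theorem exists_skeleton_of_component [Finite V] (I : Invariant G w γ h s)
    (hminor : ¬ HasCompleteMinor G h) (hu : u ∈ s.free) :
    ∃ T, u ∈ T ∧ IsSkeleton G w (component G s.free u) T (h - 1) ∧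
      ∀ X ∈ s.visible G u, ∃ a ∈ T, ∃ b ∈ s.cell X, G.Adj a b := by
  classical
  have hadj : ∀ X, ∃ a ∈ component G s.free u,
      X ∈ s.visible G u → ∃ b ∈ s.cell X, G.Adj a b := by
    intro X
    by_cases hX : X ∈ s.visible G u
    · obtain ⟨a, ha, hab⟩ := exists_adj_of_mem_shadow hu (mem_visible.1 hX).2
      exact ⟨a, ha, fun _ => hab⟩
    · exact ⟨u, .refl hu, fun hX' => absurd hX' hX⟩
  choose attach attach_mem attach_adj using hadj
  have hF : ((insert u ((s.visible G u).image attach) : Finset V) : Set V) ⊆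
      component G s.free u := by
    simp only [Finset.coe_insert, Finset.coe_image, Set.insert_subset_iff, Set.image_subset_iff]
    exact ⟨.refl hu, fun X _ => attach_mem X⟩
  obtain ⟨T, hFT, hT⟩ := exists_skeleton G w (fun _ hv _ hv' => linked_component hv hv') hF
    (Finset.mem_insert_self u _)
  refine ⟨T, hFT (by simp), hT.mono ?_, fun X hX => ⟨attach X, hFT ?_, attach_adj X hX⟩⟩
  · have hcard := I.card_visible hminor hu
    have := (Finset.card_insert_le u ((s.visible G u).image attach)).trans
      (Nat.succ_le_succ Finset.card_image_le)
    omega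
  · simp only [Finset.coe_insert, Finset.coe_image]
    exact .inr ⟨X, hX, rfl⟩

end Invariant

theorem create_node_of_mem (hv : v ∈ T) : (s.create G u T).node v = s.count := if_pos hv

theorem create_node_of_notMem (hv : v ∉ T) : (s.create G u T).node v = s.node v := if_neg hv

theorem seen_create_count : (s.create G u T).seen s.count = s.visible G u :=
  Function.update_self ..

theorem domain_create_count : (s.create G u T).domain s.count = component G s.free u :=
  Function.update_self ..

theorem skeleton_create_count : (s.create G u T).skeleton s.count = T :=
  Function.update_self ..

theorem subset_cell_create : T ⊆ (s.create G u T).cell s.count := fun _ hv => create_node_of_mem hv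

theorem mem_of_mem_cell_create (hv : v ∈ s.free) (hvt : v ∈ (s.create G u T).cell t) : v ∈ T := by
  by_contra hvT
  exact notMem_free_of_mem_cell ((create_node_of_notMem hvT).symm.trans hvt) hv

theorem eq_count_of_mem_cell_create (hv : v ∈ s.free) (hvt : v ∈ (s.create G u T).cell t) :
    t = s.count :=
  ENat.natCast_inj.1
    ((Eq.symm hvt).trans (create_node_of_mem (mem_of_mem_cell_create hv hvt)))

theorem extends_create (hT : T ⊆ component G s.free u) : Extends G s (s.create G u T) where
  count_le := Nat.le_succ _
  node_eq _ hv := create_node_of_notMem fun hvT => hv (hT hvT).right_mem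
  seen_eq _ ht := Function.update_of_ne ht.ne ..
  domain_eq _ ht := Function.update_of_ne ht.ne ..
  skeleton_eq _ ht := Function.update_of_ne ht.ne ..
  mem_shadow _ _ ht hfree hvt := absurd (eq_count_of_mem_cell_create hfree hvt) ht.ne

theorem free_create_ssubset (hT : T ⊆ component G s.free u) (huT : u ∈ T) :
    (s.create G u T).free ⊂ s.free :=
  (Set.ssubset_iff_of_subset (extends_create hT).free_subset).2
    ⟨u, component_subset (hT huT), notMem_free_of_mem_cell (subset_cell_create huT)⟩

namespace Invariant

theorem cell_create_count_subset (I : Invariant G w γ h s) :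
    (s.create G u T).cell s.count ⊆ T := by
  intro v hv
  by_contra hvT
  exact (I.lt_count v _ ((create_node_of_notMem hvT).symm.trans hv)).ne rfl

theorem shadow_create_count_subset (I : Invariant G w γ h s) (hT : T ⊆ component G s.free u) :
    (s.create G u T).shadow G s.count ⊆ component G s.free u := by
  rintro v ⟨q, hq, hvq⟩
  have hqT := I.cell_create_count_subset hq
  exact (hT hqT).trans (hvq.symm.mono (Set.union_subset (extends_create hT).free_subset
    fun _ hx => component_subset (hT (I.cell_create_count_subset hx))))

theorem exists_visible_of_adj_component (I : Invariant G w γ h s) {a b : V}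
    (ha : a ∈ component G s.free u) (hb : b ∉ component G s.free u) (hab : G.Adj a b) :
    ∃ X ∈ s.visible G u, b ∈ s.cell X := by
  obtain ⟨X, hbX⟩ := exists_mem_cell (notMem_free_of_adj_component ha hab hb)
  have huX := component_subset_shadow ha hab hbX (Linked.refl ha.left_mem)
  exact ⟨X, mem_visible.2 ⟨I.lt_count b X hbX, huX⟩, hbX⟩

theorem isSupernode_create (I : Invariant G w γ h s) (hminor : ¬ HasCompleteMinor G h)
    (hu : u ∈ s.free) (hbuf : ∀ X < s.count, u ∉ s.shadow G X → s.Buffered G w γ u X)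
    (hT : IsSkeleton G w (component G s.free u) T (h - 1))
    (hadj : ∀ X ∈ s.visible G u, ∃ a ∈ T, ∃ b ∈ s.cell X, G.Adj a b) :
    IsSupernode G w γ h (s.create G u T) s.count := by
  have E : Extends G s (s.create G u T) := extends_create hT.subset
  constructor
  all_goals simp only [seen_create_count, domain_create_count, skeleton_create_count]
  · exact fun X hX => (mem_visible.1 hX).1
  · exact I.card_visible hminor hu
  · intro X hX Y hY hXY
    rw [E.seen_eq Y (mem_visible.1 hY).1]
    exact I.mem_seen_of_mem_visible hX hY hXY
  · intro X hX
    obtain ⟨a, ha, b, hb, hab⟩ := hadj X hX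
    exact ⟨a, subset_cell_create ha, b, E.cell_subset hb, hab⟩
  · exact I.shadow_create_count_subset hT.subset
  · exact fun v hv X hX hvX => mem_visible.2
      ⟨hX, mem_shadow_of_linked (E.shadow_subset hX hvX) (Linked.symm hv)⟩
  · intro a ha b hb hab
    obtain ⟨X, hX, hbX⟩ := I.exists_visible_of_adj_component ha hb hab
    exact ⟨X, hX, E.cell_subset hbX⟩
  · intro v hv X hX hXu x hx hwalk
    exact hbuf X hX (fun huX => hXu (mem_visible.2 ⟨hX, huX⟩)) v hv x (E.shadow_subset hX hx)
      (hwalk.mono E.above_subset le_rfl)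
  · exact subset_cell_create
  · exact hT

theorem exists_create [Finite V] (I : Invariant G w γ h s) (hminor : ¬ HasCompleteMinor G h)
    (hu : u ∈ s.free) (hbuf : ∀ X < s.count, u ∉ s.shadow G X → s.Buffered G w γ u X) :
    ∃ s' : State V, Invariant G w γ h s' ∧ s'.free ⊂ s.free := by
  obtain ⟨T, huT, hT, hadj⟩ := I.exists_skeleton_of_component hminor hu
  refine ⟨s.create G u T, I.extend (extends_create hT.subset) (fun v hv t hvt => ?_)
    (fun t ht => ?_) (fun t hle hlt => ?_) (fun v hv t hvt => ?_),
    free_create_ssubset hT.subset huT⟩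
  · exact (eq_count_of_mem_cell_create hv hvt).trans_lt (Nat.lt_succ_self _)
  · exact (Function.update_of_ne (Nat.ne_of_gt ht) ..).trans
      (I.seen_eq_empty t ((Nat.le_succ _).trans ht))
  · obtain rfl : t = s.count := le_antisymm (Nat.lt_succ_iff.1 hlt) hle
    exact I.isSupernode_create hminor hu hbuf hT hadj
  · obtain rfl := eq_count_of_mem_cell_create hv hvt
    have hvT : v ∈ (s.create G u T).skeleton s.count :=
      skeleton_create_count ▸ mem_of_mem_cell_create hv hvt
    exact ⟨∅, Finset.empty_subset _, ⟨v, hvT, .refl hvt (by simp)⟩, by simp⟩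

end Invariant

end Create

/-- The state in which no supernode has been created. -/
def initial (V : Type) : State V where
  node _ := ⊤
  count := 0
  seen _ := ∅
  domain _ := ∅
  skeleton _ := ∅

theorem invariant_initial : Invariant G w γ h (initial V) where
  lt_count _ t hv := absurd (Eq.symm hv) (ENat.natCast_ne_top t)
  seen_eq_empty _ _ := rfl
  isSupernode _ ht := absurd ht (Nat.not_lt_zero _)
  anchored _ t hv := absurd (Eq.symm hv) (ENat.natCast_ne_top t)

/-- As long as some component of unassigned vertices is too close to a supernode that it does not
see, absorb the part of it that is close; otherwise create a supernode in a component. -/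
theorem Invariant.exists_free_eq_empty [Finite V] {s : State V} (hminor : ¬ HasCompleteMinor G h)
    (I : Invariant G w γ h s) : ∃ s' : State V, Invariant G w γ h s' ∧ s'.free = ∅ := by
  obtain hempty | ⟨u, hu⟩ := s.free.eq_empty_or_nonempty
  · exact ⟨s, I, hempty⟩
  obtain ⟨s', I', _⟩ : ∃ s' : State V, Invariant G w γ h s' ∧ s'.free ⊂ s.free := by
    by_cases hbuf : ∀ X < s.count, u ∉ s.shadow G X → s.Buffered G w γ u X
    · exact I.exists_create hminor hu hbuf
    · push Not at hbuf
      obtain ⟨X, hX, huX, hunbuf⟩ := hbuf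
      exact I.exists_absorb hX huX hunbuf
  exact I'.exists_free_eq_empty hminor
termination_by s.free.ncard
decreasing_by exact Set.ncard_lt_ncard ‹s'.free ⊂ s.free›

section Reach

variable {a b k : ℕ} {x y : V} {c : ℝ}

namespace Invariant

theorem mem_domain (I : Invariant G w γ h s) (hv : v ∈ s.cell t) : v ∈ s.domain t :=
  (I.isSupernode t (I.lt_count v t hv)).shadow_subset (cell_subset_shadow hv)

theorem mem_seen_or_mem_domain_of_adj (I : Invariant G w γ h s) (ha : a < s.count)
    (hx : x ∈ s.domain a) (hxy : G.Adj x y) :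
    (∃ X ∈ s.seen a, y ∈ s.cell X) ∨ y ∈ s.domain a :=
  or_iff_not_imp_right.2 fun hy => (I.isSupernode a ha).boundary x hx y hy hxy

theorem mem_domain_of_adj (I : Invariant G w γ h s) (ha : a < s.count) (hx : x ∈ s.domain a)
    (hy : y ∈ s.above a) (hxy : G.Adj x y) : y ∈ s.domain a := by
  refine (I.mem_seen_or_mem_domain_of_adj ha hx hxy).resolve_left ?_
  rintro ⟨X, hX, hyX⟩
  exact ((I.isSupernode a ha).lt_of_mem_seen X hX).not_ge
    (ENat.natCast_le_natCast.1 (hy.trans_eq hyX))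

theorem walkWithin_domain (I : Invariant G w γ h s) (ha : a < s.count)
    (hwalk : WalkWithin G w (s.above a) v x c) (hv : v ∈ s.domain a) :
    WalkWithin G w (s.domain a) v x c :=
  hwalk.restrict (fun _ hp _ hq => I.mem_domain_of_adj ha hp hq) hv

theorem mem_seen_of_walkWithin (I : Invariant G w γ h s) (ha : a < s.count)
    (hv : v ∈ s.domain a) (hXa : X < a) (hx : x ∈ s.cell X)
    (hwalk : WalkWithin G w (s.above X) v x γ) : X ∈ s.seen a := by
  by_contra hX
  exact (I.isSupernode a ha).buffer v hv X hXa hX x (cell_subset_shadow hx) hwalk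

/-- The smallest supernode on a walk of cost at most `γ` out of the domain of `a`, if smaller than
`a`, is seen by `a` because of the buffers. -/
theorem exists_domain_of_walkWithin (I : Invariant G w γ h s) (ha : a < s.count)
    (hv : v ∈ s.domain a) (hba : b ≤ a) (hwalk : WalkWithin G w (s.above b) v x γ) :
    ∃ a', (a' = a ∨ a' ∈ s.seen a) ∧ b ≤ a' ∧ x ∈ s.domain a' ∧ x ∈ s.above a' := by
  obtain ⟨z, hvz, hzx⟩ := hwalk.exists_forall_le s.node
  rcases le_or_gt (a : ℕ∞) (s.node z) with haz | hza
  · have hvx := hvz.trans hzx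
    have habove : WalkWithin G w (s.above a) v x (γ + γ) :=
      hvx.mono (fun y hy => haz.trans hy.2) le_rfl
    exact ⟨a, .inl rfl, hba, (I.walkWithin_domain ha habove hv).right_mem, habove.right_mem⟩
  · obtain ⟨X, hzX⟩ := ENat.ne_top_iff_exists.1 hza.ne_top
    have hXa : X < a := ENat.natCast_lt_natCast.1 (hzX.trans_lt hza)
    have hzX' : z ∈ s.cell X := hzX.symm
    have to_above {y y'} (hw : WalkWithin G w {x ∈ s.above b | s.node z ≤ s.node x} y y' γ) :
        WalkWithin G w (s.above X) y y' γ :=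
      hw.mono (fun x hx => hzX.trans_le hx.2) le_rfl
    have hbX : b ≤ X := ENat.natCast_le_natCast.1 (hvz.right_mem.1.trans_eq hzX')
    exact ⟨X, .inr (I.mem_seen_of_walkWithin ha hv hXa hzX' (to_above hvz)), hbX,
      (I.walkWithin_domain (hXa.trans ha) (to_above hzx) (I.mem_domain hzX')).right_mem,
      (to_above hzx).right_mem⟩

theorem mem_descend_one (I : Invariant G w γ h s) (ha : a < s.count)
    (hv : v ∈ s.domain a) (hba : b ≤ a) (hy : y ∈ s.cell b)
    (hwalk : WalkWithin G w (s.above b) v y γ) : b ∈ descend s.seen 1 a := by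
  obtain ⟨a', ha', hba', -, hya'⟩ := I.exists_domain_of_walkWithin ha hv hba hwalk
  obtain rfl : a' = b := le_antisymm (ENat.natCast_le_natCast.1 (hya'.trans_eq hy)) hba'
  rcases ha' with rfl | hseen
  · exact self_mem_descend
  · exact mem_descend_succ_of_mem hseen self_mem_descend

/-- Each stretch of cost `γ`, and each of the edges between two stretches, leads from the domain
of a supernode to the domain of the same or of a seen supernode. -/
theorem mem_descend (I : Invariant G w γ h s) (hγ : 0 ≤ γ) (ha : a < s.count)
    (hv : v ∈ s.domain a) (hba : b ≤ a) (hy : y ∈ s.cell b)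
    (hwalk : WalkWithin G w (s.above b) v y ((k + 1) * γ)) :
    b ∈ descend s.seen (2 * k + 1) a := by
  induction k generalizing a v with
  | zero => exact I.mem_descend_one ha hv hba hy (by simpa using hwalk)
  | succ k ih =>
    rcases hwalk.split hγ with hshort | ⟨x, x', hvx, hxx', hrest⟩
    · exact mem_descend_of_le (I.mem_descend_one ha hv hba hy hshort) (by omega)
    replace hrest := hrest.mono_cost (c' := (k + 1) * γ) (by push_cast; linarith)
    obtain ⟨a', ha', hba', hx, -⟩ := I.exists_domain_of_walkWithin ha hv hba hvx
    have ha'n : a' < s.count := ha'.elim (fun heq => heq ▸ ha) fun hseen =>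
      ((I.isSupernode a ha).lt_of_mem_seen a' hseen).trans ha
    have hb : b ∈ descend s.seen (2 * k + 2) a' := by
      rcases I.mem_seen_or_mem_domain_of_adj ha'n hx hxx' with ⟨X, hX, hx'X⟩ | hx'
      · have hbX : b ≤ X := ENat.natCast_le_natCast.1 (hrest.left_mem.trans_eq hx'X)
        exact mem_descend_succ_of_mem hX
          (ih (I.lt_count x' X hx'X) (I.mem_domain hx'X) hbX hrest)
      · exact mem_descend_of_le (ih ha'n hx' hba' hrest) (Nat.le_succ _)
    rcases ha' with rfl | hseen
    · exact mem_descend_of_le hb (by omega)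
    · exact mem_descend_succ_of_mem hseen hb

theorem card_descend_seen_le (I : Invariant G w γ h s) (d a : ℕ) :
    (descend s.seen d a).card ≤ (d + (h - 1)).choose (h - 1) := by
  refine card_descend_le (fun a X hX Y hY hXY => ?_) fun a => ?_
  all_goals rcases lt_or_ge a s.count with ha | ha
  · exact (I.isSupernode a ha).mem_seen_of_lt X hX Y hY hXY
  · simp [I.seen_eq_empty a ha] at hX
  · exact Nat.le_sub_of_add_le ((Nat.le_succ _).trans (I.isSupernode a ha).card_seen)
  · simp [I.seen_eq_empty a ha]

end Invariant

end Reach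

section Clustering

variable {a b k n : ℕ} {x y : V} {δ ε r : ℝ} {ctr : V → V}

/-- Every vertex is at distance at most `δ` from the centre `ctr v` of its cluster within the
cluster, and the centres in each supernode `t` are sparse in `domain t`. -/
structure IsClustering (G : SimpleGraph V) (w : Sym2 V → ℝ≥0) (s : State V) (δ ε : ℝ) (n : ℕ)
    (ctr : V → V) : Prop where
  node_ctr : ∀ v, s.node (ctr v) = s.node v
  walkWithin : ∀ v, WalkWithin G w {x | ctr x = ctr v} v (ctr v) δ
  isSparse : ∀ t, IsSparse G w (s.domain t) (ctr '' s.cell t) ε n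

theorem IsSupernode.exists_centers [Finite V] (S : IsSupernode G w γ h s t) (hγ : 0 ≤ γ)
    (hε : 0 < ε) (hanch : ∀ v ∈ s.cell t, s.Anchored G w γ v t) :
    ∃ root : V → V, (∀ v ∈ s.cell t, root v ∈ s.cell t ∧
        WalkWithin G w {x ∈ s.cell t | root x = root v} v (root v) (γ * h + ε)) ∧
      IsSparse G w (s.domain t) (root '' s.cell t) ε (h - 1) := by
  obtain ⟨Z, hZ, hnet, hsparse⟩ := S.isSkeleton.exists_net hε
  have hZcell := hZ.trans S.skeleton_subset
  obtain ⟨root, hroot⟩ := exists_isVoronoi G w hZcell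
  have near : ∀ v ∈ s.cell t, ∃ z ∈ Z, WalkWithin G w (s.cell t) v z (γ * h + ε) := by
    intro v hv
    obtain ⟨M, hM, ⟨y, hy, hvy⟩, -⟩ := hanch v hv
    obtain ⟨z, hz, hyz⟩ := hnet y hy
    have hMh : (M.card : ℝ) ≤ h := by
      exact_mod_cast (Finset.card_le_card hM).trans ((Nat.le_add_right _ 2).trans S.card_seen)
    exact ⟨z, hz, (hvy.trans (hyz.mono S.skeleton_subset le_rfl)).mono_cost (by gcongr)⟩
  have root_mem : ∀ v ∈ s.cell t, root v ∈ Z := fun v hv =>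
    let ⟨z, hz, hvz⟩ := near v hv
    hroot.root_mem v z hz hvz.linked
  refine ⟨root, fun v hv => ⟨hZcell (root_mem v hv), ?_⟩, fun B hB => hsparse B ?_⟩
  · obtain ⟨z, hz, hvz⟩ := near v hv
    exact hroot.walkWithin v z hz _ hvz
  · exact hB.trans (Set.image_subset_iff.2 root_mem)

theorem Invariant.exists_isClustering [Finite V] (I : Invariant G w γ h s) (hfree : s.free = ∅)
    (hγ : 0 ≤ γ) (hε : 0 < ε) : ∃ ctr, IsClustering G w s (γ * h + ε) ε (h - 1) ctr := by
  have hcell : ∀ t, ∃ root : V → V, (∀ v ∈ s.cell t, root v ∈ s.cell t ∧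
        WalkWithin G w {x ∈ s.cell t | root x = root v} v (root v) (γ * h + ε)) ∧
      IsSparse G w (s.domain t) (root '' s.cell t) ε (h - 1) := by
    intro t
    obtain hempty | ⟨v, hv⟩ := (s.cell t).eq_empty_or_nonempty
    · refine ⟨id, by simp [hempty], fun B hB => ?_⟩
      simp [Set.subset_empty_iff.1 (hB.trans_eq (by simp [hempty]))]
    · exact (I.isSupernode t (I.lt_count v t hv)).exists_centers hγ hε fun v hv =>
        I.anchored v t hv
  choose root hroot hsparse using hcell
  have hmem v : ∃ t, v ∈ s.cell t := exists_mem_cell (hfree ▸ Set.notMem_empty v)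
  let ctr v := root (s.node v).toNat v
  have ctr_eq {v t} (hv : v ∈ s.cell t) : ctr v = root t v := by
    simp only [ctr, show s.node v = t from hv, ENat.toNat_natCast]
  refine ⟨ctr, fun v => ?_, fun v => ?_, fun t => ?_⟩
  · obtain ⟨t, hv⟩ := hmem v
    rw [ctr_eq hv]
    exact (hroot t v hv).1.trans (Eq.symm hv)
  · obtain ⟨t, hv⟩ := hmem v
    rw [ctr_eq hv]
    exact (hroot t v hv).2.mono (fun x hx => (ctr_eq hx.1).trans hx.2) le_rfl
  · rw [Set.image_congr fun v hv => ctr_eq hv]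
    exact hsparse t

theorem IsClustering.walkWithin_above (K : IsClustering G w s δ ε n ctr) (hx : x ∈ s.above b) :
    WalkWithin G w (s.above b) x (ctr x) δ := by
  refine (K.walkWithin x).mono (fun y hy => ?_) le_rfl
  exact hx.trans_eq ((K.node_ctr x).symm.trans ((congrArg s.node hy).symm.trans (K.node_ctr y)))

theorem IsClustering.walkWithin_of_mem_reachableCenters (K : IsClustering G w s δ ε n ctr)
    (hx : x ∈ reachableCenters G w s.node ctr r v) (hxb : x ∈ s.cell b) :
    WalkWithin G w (s.above b) x (ctr v) (δ + r + δ) := by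
  obtain ⟨y, z, hy, rfl, hwalk⟩ := hx
  have hz : s.node z = b := (K.node_ctr z).symm.trans hxb
  rw [hz] at hwalk
  rw [← hy]
  exact ((K.walkWithin_above hwalk.right_mem).symm.trans hwalk.symm).trans
    (K.walkWithin_above hwalk.left_mem)

namespace Invariant

theorem ncard_reachableCenters_inter_cell_le (I : Invariant G w γ h s)
    (K : IsClustering G w s δ ε n ctr) :
    (reachableCenters G w s.node ctr r v ∩ s.cell b).ncard ≤
      n * (⌊(4 * δ + 2 * r) / ε⌋₊ + 2) := by
  refine K.isSparse b _ ?_ _ fun z hz z' hz' => ?_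
  · rintro _ ⟨⟨-, y, -, rfl, -⟩, hyb⟩
    exact ⟨y, (K.node_ctr y).symm.trans hyb, rfl⟩
  · have hzz' := (K.walkWithin_of_mem_reachableCenters hz.1 hz.2).trans
      (K.walkWithin_of_mem_reachableCenters hz'.1 hz'.2).symm
    exact (I.walkWithin_domain (I.lt_count z b hz.2) hzz' (I.mem_domain hz.2)).mono_cost
      (by linarith)

theorem mem_descend_of_mem_reachableCenters (I : Invariant G w γ h s)
    (K : IsClustering G w s δ ε n ctr) (hγ : 0 ≤ γ) (hr : r ≤ (k + 1) * γ) (hv : v ∈ s.cell a)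
    (hx : x ∈ reachableCenters G w s.node ctr r v) (hxb : x ∈ s.cell b) :
    b ∈ descend s.seen (2 * k + 1) a := by
  obtain ⟨y, z, hy, rfl, hwalk⟩ := hx
  have hya : y ∈ s.cell a :=
    (K.node_ctr y).symm.trans ((congrArg s.node hy).trans ((K.node_ctr v).trans hv))
  have hz : s.node z = b := (K.node_ctr z).symm.trans hxb
  rw [hz] at hwalk
  exact I.mem_descend hγ (I.lt_count y a hya) (I.mem_domain hya)
    (ENat.natCast_le_natCast.1 (hwalk.left_mem.trans_eq hya)) hz (hwalk.mono_cost hr)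

theorem ncard_reachableCenters_le [Finite V] (I : Invariant G w γ h s) (hfree : s.free = ∅)
    (K : IsClustering G w s δ ε n ctr) (hγ : 0 ≤ γ) (hr : r ≤ (k + 1) * γ) (v : V) :
    (reachableCenters G w s.node ctr r v).ncard ≤
      (2 * k + 1 + (h - 1)).choose (h - 1) * (n * (⌊(4 * δ + 2 * r) / ε⌋₊ + 2)) := by
  have hmem x : ∃ t, x ∈ s.cell t := exists_mem_cell (hfree ▸ Set.notMem_empty x)
  obtain ⟨a, hv⟩ := hmem v
  set reach := reachableCenters G w s.node ctr r v
  have hcover : reach ⊆ ⋃ b ∈ descend s.seen (2 * k + 1) a, reach ∩ s.cell b := fun x hx =>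
    let ⟨b, hxb⟩ := hmem x
    Set.mem_biUnion (I.mem_descend_of_mem_reachableCenters K hγ hr hv hx hxb) ⟨hx, hxb⟩
  calc reach.ncard ≤ (⋃ b ∈ descend s.seen (2 * k + 1) a, reach ∩ s.cell b).ncard :=
        Set.ncard_le_ncard hcover
    _ ≤ ∑ b ∈ descend s.seen (2 * k + 1) a, (reach ∩ s.cell b).ncard :=
        Finset.set_ncard_biUnion_le _ _
    _ ≤ (descend s.seen (2 * k + 1) a).card * (n * (⌊(4 * δ + 2 * r) / ε⌋₊ + 2)) :=
        Finset.sum_le_card_nsmul _ _ _ fun b _ => I.ncard_reachableCenters_inter_cell_le K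
    _ ≤ _ := Nat.mul_le_mul_right _ (I.card_descend_seen_le _ _)

end Invariant

end Clustering

end State

section Main

variable {h : ℕ} {r ρ : ℝ}

theorem pos_of_not_hasCompleteMinor {G : SimpleGraph V} (hminor : ¬HasCompleteMinor G h) : 0 < h :=
  Nat.pos_of_ne_zero fun hzero =>
    hminor (hzero ▸ ⟨Fin.elim0, (·.elim0), (·.elim0), (·.elim0)⟩)

variable [Finite V]

/-- The radius is `γ * h + ε = ρ / 2` for `γ = ρ / (4 * h)` and `ε = ρ / 4`. -/
theorem exists_clustering {G : SimpleGraph V} (w : Sym2 V → ℝ≥0) (hminor : ¬HasCompleteMinor G h)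
    (hρ : 0 < ρ) :
    ∃ (level : V → ℕ∞) (ctr : V → V), (∀ v, level (ctr v) = level v) ∧
      (∀ v, WalkWithin G w {x | ctr x = ctr v} v (ctr v) (ρ / 2)) ∧
      ∀ r > 0, ∀ v, (reachableCenters G w level ctr r v).ncard ≤
        (h - 2 + 2 * ⌈4 * h * r / ρ⌉₊).choose (h - 1) * ((h - 1) * (⌊8 * r / ρ + 8⌋₊ + 2)) := by
  have hh : (0 : ℝ) < h := Nat.cast_pos.2 (pos_of_not_hasCompleteMinor hminor)
  have hγ : 0 ≤ ρ / (4 * h) := by positivity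
  obtain ⟨s, I, hfree⟩ :=
    (State.invariant_initial (G := G) (w := w) (γ := ρ / (4 * h)) (h := h)).exists_free_eq_empty
      hminor
  obtain ⟨ctr, K⟩ := I.exists_isClustering hfree hγ (by positivity : 0 < ρ / 4)
  have hδ : ρ / (4 * h) * h + ρ / 4 = ρ / 2 := by field_simp; norm_num
  rw [hδ] at K
  refine ⟨s.node, ctr, K.node_ctr, K.walkWithin, fun r hr v => ?_⟩
  obtain ⟨t, hv⟩ := State.exists_mem_cell (hfree ▸ Set.notMem_empty v)
  have hseen := (I.isSupernode t (I.lt_count v t hv)).card_seen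
  obtain ⟨k, hk⟩ := Nat.exists_eq_succ_of_ne_zero
    (Nat.ceil_pos.2 (by positivity : 0 < 4 * h * r / ρ)).ne'
  have hrk : r ≤ (k + 1) * (ρ / (4 * h)) := by
    have hceil : 4 * h * r / ρ ≤ (k + 1 : ℕ) := (Nat.le_ceil _).trans_eq (congrArg Nat.cast hk)
    calc r = 4 * h * r / ρ * (ρ / (4 * h)) := by field_simp
      _ ≤ (k + 1) * (ρ / (4 * h)) := by gcongr; exact_mod_cast hceil
  convert I.ncard_reachableCenters_le hfree K hγ hrk v using 3
  · omega
  · congr 2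
    field_simp
    ring

theorem clustering_bound_le (hh : 0 < h) (hr : 0 < r) (hρ : 0 < ρ) (m : ℕ) :
    ((m * ((h - 1) * (⌊8 * r / ρ + 8⌋₊ + 2)) : ℕ) : ℝ) ≤ m * (12 + 8 * r / ρ) * (h - 1) := by
  have hfloor : (⌊8 * r / ρ + 8⌋₊ : ℝ) ≤ 8 * r / ρ + 8 := Nat.floor_le (by positivity)
  have hh' : (1 : ℝ) ≤ h := Nat.one_le_cast.2 hh
  calc ((m * ((h - 1) * (⌊8 * r / ρ + 8⌋₊ + 2)) : ℕ) : ℝ)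
      = m * (⌊8 * r / ρ + 8⌋₊ + 2) * (h - 1) := by push_cast [Nat.cast_sub hh]; ring
    _ ≤ m * (12 + 8 * r / ρ) * (h - 1) := by
      gcongr ?_ * ?_ * _
      linarith

theorem stmt_2_general (G : SimpleGraph V) (w : Sym2 V → ℝ≥0∞) (hminor : ¬HasCompleteMinor G h)
    (hρ : 0 < ρ) :
    ∃ (P : Set (Set V)) (le : Set V → Set V → Prop), Setoid.IsPartition P ∧
      (∀ X ∈ P, ∀ u ∈ X, ∀ v ∈ X, distOn G w X u v ≤ ENNReal.ofReal ρ) ∧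
      IsLinearOrderOn P le ∧
      ∀ r : ℝ, 0 < r → (wcol G w P le r : ℝ) ≤
        ((h - 2 + 2 * ⌈4 * (h : ℝ) * r / ρ⌉₊).choose (h - 1) : ℝ) * (12 + 8 * r / ρ) *
          ((h : ℝ) - 1) := by
  obtain ⟨level, ctr, hlevel, hradius, hreach⟩ := exists_clustering (ENNReal.toNNReal ∘ w)
    (fun hfin : HasCompleteMinor (finiteEdges G w) h => hminor hfin.of_finiteEdges) hρ
  refine ⟨(Setoid.ker (clusterKey level ctr)).classes, FiberLE (clusterKey level ctr),
    Setoid.isPartition_classes _, ?_, isLinearOrderOn_fiberLE, fun r hr => ?_⟩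
  · simpa only [add_halves] using distOn_cluster_le hlevel hradius
  · exact (Nat.cast_le.2 (wcol_le hlevel hr.le (hreach r hr))).trans
      (clustering_bound_le (pos_of_not_hasCompleteMinor hminor) hr hρ _)

end Main

theorem stmt_2 {V : Type} [Fintype V] (h : ℕ) (hh : 0 < h)
    (G : SimpleGraph V) (w : Sym2 V → ℝ≥0∞) (hminor : ¬ HasCompleteMinor G h)
    (ρ : ℝ) (hρ : 0 < ρ) :
    ∃ (P : Set (Set V)) (le : Set V → Set V → Prop),
      Setoid.IsPartition P ∧
      (∀ X ∈ P, ∀ u ∈ X, ∀ v ∈ X, distOn G w X u v ≤ ENNReal.ofReal ρ) ∧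
      IsLinearOrderOn P le ∧
      ∀ r : ℝ, ρ < r →
        (wcol G w P le r : ℝ) ≤
          ((h - 2 + 2 * ⌈4 * (h : ℝ) * r / ρ⌉₊).choose (h - 1) : ℝ) *
            (12 + 8 * r / ρ) * ((h : ℝ) - 1) := by
  obtain ⟨P, le, hP, hdiam, hle, hwcol⟩ := stmt_2_general G w hminor hρ
  exact ⟨P, le, hP, hdiam, hle, fun r hr => hwcol r (hρ.trans hr)⟩

end ScatterDim
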